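/- arXiv:2306.07852 — 8 statements merged into one kernel-verified Lean document; each statement's English description precedes it below -/
import Mathlib

section
/- Let θ: ℝ → ℝ be a strictly increasing function with θ(0) = 0. Then for all real numbers a and b, the equation θ(|a − b|) = θ(a) + θ(b) holds if and only if a ≥ 0, b ≥ 0 and a·b = 0. (This is the equivalence, used in the paper to rewrite the complementarity conditions of the KKT system as a single smooth equation.) -/
theorem theta_aux_nonneg (θ : ℝ → ℝ) (hθ : StrictMono θ) (hθ0 : θ 0 = 0) (a b : ℝ)
    (h : θ |a - b| = θ a + θ b) : 0 ≤ a := by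
  by_contra ha
  have ha : a < 0 := not_le.mp ha
  have h1 : θ a < 0 := hθ0 ▸ hθ ha
  have h2 : θ |a - b| < θ b := by linarith
  have h3 := hθ.lt_iff_lt.mp h2
  have h4 := neg_le_abs (a - b)
  linarith

/-- For a strictly increasing `θ : ℝ → ℝ` with `θ 0 = 0`, the equation
`θ |a - b| = θ a + θ b` holds iff `a ≥ 0`, `b ≥ 0` and `a * b = 0`. -/
theorem theta_abs_sub_eq_add_iff_complementarity
    (θ : ℝ → ℝ) (hθ : StrictMono θ) (hθ0 : θ 0 = 0) (a b : ℝ) :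
    θ |a - b| = θ a + θ b ↔ (0 ≤ a ∧ 0 ≤ b ∧ a * b = 0) := by
  constructor
  · intro h
    have ha := theta_aux_nonneg θ hθ hθ0 a b h
    have hb := theta_aux_nonneg θ hθ hθ0 b a (by rw [abs_sub_comm, h, add_comm])
    refine ⟨ha, hb, ?_⟩
    by_contra hab
    have ha' : 0 < a := lt_of_le_of_ne ha (fun e => hab (by simp [← e]))
    have hb' : 0 < b := lt_of_le_of_ne hb (fun e => hab (by simp [← e]))
    have h1 : 0 < θ a := by simpa [hθ0] using hθ ha'
    have h2 : 0 < θ b := by simpa [hθ0] using hθ hb'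
    have h3 : a < |a - b| := hθ.lt_iff_lt.mp (by linarith)
    have h4 : b < |a - b| := hθ.lt_iff_lt.mp (by linarith)
    rcases abs_cases (a - b) with h5 | h5 <;> linarith
  · rintro ⟨ha, hb, hab⟩
    rcases mul_eq_zero.mp hab with rfl | rfl
    · simp [hθ0, abs_of_nonneg hb]
    · simp [hθ0, abs_of_nonneg ha]
end

section
/- The cubic complementarity function φ: ℝ² → ℝ defined by φ(a,b) = |a − b|³ − a³ − b³ satisfies: (i) for all a, b ∈ ℝ, φ(a,b) = 0 if and only if a ≥ 0, b ≥ 0 and a·b = 0; and (ii) φ is twice continuously differentiable on ℝ². -/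
/-- The cubic complementarity function `φ(a,b) = |a - b|³ - a³ - b³`. -/
noncomputable def cubicPhi (a b : ℝ) : ℝ := |a - b| ^ 3 - a ^ 3 - b ^ 3

lemma hasDerivAt_mul_abs_aux (x : ℝ) : HasDerivAt (fun y : ℝ => y * |y|) (2 * |x|) x := by
  rcases lt_trichotomy x 0 with h | h | h
  · have := (hasDerivAt_id x).mul (hasDerivAt_abs_neg h)
    refine this.congr_deriv ?_
    simp [abs_of_neg h]; ring
  · subst h
    rw [hasDerivAt_iff_tendsto_slope_zero]
    have h1 : Filter.Tendsto (fun t : ℝ => |t|) (nhdsWithin 0 {0}ᶜ) (nhds (2 * |(0:ℝ)|)) := by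
      have : Filter.Tendsto (fun t : ℝ => |t|) (nhds 0) (nhds |(0:ℝ)|) := continuous_abs.tendsto 0
      simpa using this.mono_left nhdsWithin_le_nhds
    refine h1.congr' ?_
    filter_upwards [self_mem_nhdsWithin] with t ht
    have ht' : t ≠ 0 := ht
    simp [ht']
  · have := (hasDerivAt_id x).mul (hasDerivAt_abs_pos h)
    refine this.congr_deriv ?_
    simp [abs_of_pos h]; ring

lemma contDiff_abs_cube_aux : ContDiff ℝ 2 (fun x : ℝ => |x| ^ 3) := by
  have e : (fun x : ℝ => |x| ^ 3) = fun x => x * (x * |x|) := by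
    funext x
    have := abs_mul_abs_self x
    calc |x| ^ 3 = (|x| * |x|) * |x| := by ring
      _ = _ := by rw [this]; ring
  have h1 : ∀ x : ℝ, HasDerivAt (fun x : ℝ => |x| ^ 3) (3 * (x * |x|)) x := by
    intro x
    rw [e]
    refine ((hasDerivAt_id x).mul (hasDerivAt_mul_abs_aux x)).congr_deriv ?_
    simp; ring
  have c1 : ContDiff ℝ 1 (fun y : ℝ => y * |y|) := by
    rw [contDiff_one_iff_deriv]
    refine ⟨fun x => (hasDerivAt_mul_abs_aux x).differentiableAt, ?_⟩
    rw [funext fun x => (hasDerivAt_mul_abs_aux x).deriv]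
    fun_prop
  rw [show (2 : WithTop ℕ∞) = 1 + 1 by norm_num, contDiff_succ_iff_deriv]
  refine ⟨fun x => (h1 x).differentiableAt, by simp, ?_⟩
  rw [funext fun x => (h1 x).deriv]
  exact contDiff_const.mul c1

lemma cubic_aux (a b : ℝ) (h : b ≤ a) :
    (a - b) ^ 3 - a ^ 3 - b ^ 3 = 0 ↔ (0 ≤ a ∧ 0 ≤ b ∧ a * b = 0) := by
  constructor
  · intro h0
    have h1 : b * (3 * a ^ 2 - 3 * a * b + 2 * b ^ 2) = 0 := by linarith
    have hb : b = 0 := by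
      rcases mul_eq_zero.1 h1 with hb | hq
      · exact hb
      · have : b ^ 2 = 0 := by nlinarith [sq_nonneg (2 * a - b), sq_nonneg b]
        exact pow_eq_zero_iff (two_ne_zero) |>.1 this
    subst hb
    simpa using h
  · rintro ⟨ha, hb, hab⟩
    have hb0 : b = 0 := by nlinarith
    subst hb0
    ring

/-- `φ(a,b) = 0` iff `a ≥ 0`, `b ≥ 0` and `a·b = 0`; moreover `φ` is
twice continuously differentiable on `ℝ²`. -/
theorem cubicPhi_zero_iff_and_contDiff :
    (∀ a b : ℝ, cubicPhi a b = 0 ↔ (0 ≤ a ∧ 0 ≤ b ∧ a * b = 0)) ∧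
    ContDiff ℝ 2 (fun p : ℝ × ℝ => cubicPhi p.1 p.2) := by
  constructor
  · intro a b
    unfold cubicPhi
    rcases le_total b a with h | h
    · rw [abs_of_nonneg (sub_nonneg.2 h)]
      exact cubic_aux a b h
    · rw [abs_sub_comm, abs_of_nonneg (sub_nonneg.2 h), sub_right_comm, cubic_aux b a h, mul_comm]
      tauto
  · unfold cubicPhi
    have h : ContDiff ℝ 2 (fun p : ℝ × ℝ => |p.1 - p.2| ^ 3) :=
      contDiff_abs_cube_aux.comp (contDiff_fst.sub contDiff_snd)
    exact (h.sub (contDiff_fst.pow 3)).sub (contDiff_snd.pow 3)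
end

section
/- Let f: ℝⁿ → ℝ and g: ℝⁿ → ℝᵐ be continuously differentiable, and define F: ℝⁿ × ℝᵐ → ℝⁿ × ℝᵐ by F(x,μ) = ( ∇f(x) + Σᵢ μᵢ ∇gᵢ(x) , (φ(μᵢ, −gᵢ(x)))ᵢ₌₁,…,ₘ ), where φ(a,b) = |a−b|³ − a³ − b³. Then F(x,μ) = 0 if and only if (x,μ) is a KKT pair for the problem of minimizing f subject to g(x) ≤ 0. -/
theorem cubicPhi_aux_le {a b : ℝ} (hab : b ≤ a) (h : (a - b) ^ 3 - a ^ 3 - b ^ 3 = 0) :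
    b = 0 := by
  have h1 : b * (3 * a ^ 2 - 3 * a * b + 2 * b ^ 2) = 0 := by linear_combination -h
  rcases mul_eq_zero.mp h1 with h2 | h2
  · exact h2
  · have h3 : b ^ 2 = 0 := by nlinarith [sq_nonneg (2 * a - b), sq_nonneg b]
    exact pow_eq_zero_iff (two_ne_zero) |>.mp h3

theorem cubicPhi_eq_zero_iff_aux (a b : ℝ) :
    cubicPhi a b = 0 ↔ 0 ≤ a ∧ 0 ≤ b ∧ a * b = 0 := by
  unfold cubicPhi
  constructor
  · intro h
    rcases le_total b a with hab | hab
    · rw [abs_of_nonneg (sub_nonneg.mpr hab)] at h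
      have hb := cubicPhi_aux_le hab h
      subst hb
      simp [hab]
    · rw [abs_of_nonpos (sub_nonpos.mpr hab)] at h
      have ha := cubicPhi_aux_le hab (by linear_combination h)
      subst ha
      simp [hab]
  · rintro ⟨ha, hb, h⟩
    rcases mul_eq_zero.mp h with h | h
    · subst h
      simp [abs_of_nonneg hb]
    · subst h
      simp [abs_of_nonneg ha]

/-- For C¹ functions `f : ℝⁿ → ℝ` and `g : ℝⁿ → ℝᵐ`, the map
`F(x,μ) = (∇f(x) + Σᵢ μᵢ ∇gᵢ(x), (φ(μᵢ, -gᵢ(x)))ᵢ)` vanishes at `(x,μ)` iff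
`(x,μ)` is a KKT pair for `min f(x)` subject to `g(x) ≤ 0`. -/
theorem cubicPhi_KKT_system_iff_KKT_pair
    {n m : ℕ} (f : EuclideanSpace ℝ (Fin n) → ℝ)
    (g : Fin m → EuclideanSpace ℝ (Fin n) → ℝ)
    (hf : ContDiff ℝ 1 f) (hg : ∀ i, ContDiff ℝ 1 (g i))
    (x : EuclideanSpace ℝ (Fin n)) (μ : Fin m → ℝ) :
    ((gradient f x + ∑ i, μ i • gradient (g i) x = 0) ∧
      (∀ i, cubicPhi (μ i) (-(g i x)) = 0)) ↔
    ((gradient f x + ∑ i, μ i • gradient (g i) x = 0) ∧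
      (∀ i, g i x ≤ 0) ∧ (∀ i, 0 ≤ μ i) ∧ (∀ i, μ i * g i x = 0)) := by
  simp only [cubicPhi_eq_zero_iff_aux]
  refine and_congr_right fun _ => ?_
  constructor
  · intro h
    exact ⟨fun i => by linarith [(h i).2.1], fun i => (h i).1, fun i => by linarith [(h i).2.2]⟩
  · rintro ⟨h1, h2, h3⟩ i
    exact ⟨h2 i, by linarith [h1 i], by linarith [h3 i]⟩
end

section
/- Let J: ℝⁿ → ℝ and g: ℝⁿ × [0,1] → ℝᵐ be twice continuously differentiable, let a ∈ ℝⁿ satisfy gᵢ(a, 0) < 0 for every i, and let ρ_a be the associated homotopy map. Then: (i) the Jacobian of the map (u, μ) ↦ ρ_a(0, u, μ) at the point (a, 0) is the block matrix with blocks Iₙ (identity) and 0 in the first row and with lower-right block diag(−3g₁(a,0)², …, −3gₘ(a,0)²), and in particular is nonsingular; (ii) consequently there exist ε > 0 and continuously differentiable functions u: [0, ε) → ℝⁿ and μ: [0, ε) → ℝᵐ with u(0) = a, μ(0) = 0 and ρ_a(λ, u(λ), μ(λ)) = 0 for all λ ∈ [0, ε), so that near λ = 0 the zero set of ρ_a is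 locally a graph over the homotopy parameter λ. -/
/-- The homotopy map
`ρ_a(λ, u, μ) = (λ(∇ᵤJ(u) + ∇ᵤg(u,λ)ᵀμ) + (1-λ)(u - a), (φ(μᵢ, -gᵢ(u,λ)))ᵢ)`. -/
noncomputable def homotopyMap {n m : ℕ}
    (J : EuclideanSpace ℝ (Fin n) → ℝ)
    (g : EuclideanSpace ℝ (Fin n) → ℝ → Fin m → ℝ)
    (a : EuclideanSpace ℝ (Fin n))
    (lam : ℝ) (u : EuclideanSpace ℝ (Fin n)) (μ : Fin m → ℝ) :
    EuclideanSpace ℝ (Fin n) × (Fin m → ℝ) :=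
  (lam • (gradient J u + ∑ i, μ i • gradient (fun v => g v lam i) u)
      + (1 - lam) • (u - a),
   fun i => cubicPhi (μ i) (-(g u lam i)))

theorem hm_comp_deriv {n m : ℕ}
    (g : EuclideanSpace ℝ (Fin n) → ℝ → Fin m → ℝ)
    (hg : ∀ i, ContDiff ℝ 2 (fun q : EuclideanSpace ℝ (Fin n) × ℝ => g q.1 q.2 i))
    (a : EuclideanSpace ℝ (Fin n)) (ha : ∀ i, g a 0 i < 0) (i : Fin m) :
    HasFDerivAt (fun p : EuclideanSpace ℝ (Fin n) × (Fin m → ℝ) =>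
      cubicPhi (p.2 i) (-(g p.1 0 i)))
      ((-3 * (g a 0 i) ^ 2) • ((ContinuousLinearMap.proj i : (Fin m → ℝ) →L[ℝ] ℝ) ∘L
        ContinuousLinearMap.snd ℝ (EuclideanSpace ℝ (Fin n)) (Fin m → ℝ))) (a, 0) := by
  have hG : ContDiff ℝ 2 (fun p : EuclideanSpace ℝ (Fin n) × (Fin m → ℝ) => g p.1 0 i) :=
    (hg i).comp (contDiff_fst.prodMk contDiff_const)
  have hGd : HasFDerivAt (fun p : EuclideanSpace ℝ (Fin n) × (Fin m → ℝ) => g p.1 0 i) _ (a, 0) :=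
    (hG.differentiable (by norm_num) (a, 0)).hasFDerivAt
  have hM : HasFDerivAt (fun p : EuclideanSpace ℝ (Fin n) × (Fin m → ℝ) => p.2 i)
      ((ContinuousLinearMap.proj i : (Fin m → ℝ) →L[ℝ] ℝ) ∘L
        ContinuousLinearMap.snd ℝ (EuclideanSpace ℝ (Fin n)) (Fin m → ℝ)) (a, 0) :=
    ContinuousLinearMap.hasFDerivAt (((ContinuousLinearMap.proj i : (Fin m → ℝ) →L[ℝ] ℝ) ∘L
        ContinuousLinearMap.snd ℝ (EuclideanSpace ℝ (Fin n)) (Fin m → ℝ)))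
  have hP := (((hGd.neg.sub hM).pow 3).sub (hM.pow 3)).sub (hGd.neg.pow 3)
  have hP2 := hP.congr_of_eventuallyEq (f₁ := fun p : EuclideanSpace ℝ (Fin n) × (Fin m → ℝ) =>
      cubicPhi (p.2 i) (-(g p.1 0 i))) (by
    have hc : ContinuousAt (fun p : EuclideanSpace ℝ (Fin n) × (Fin m → ℝ) =>
      p.2 i - (-(g p.1 0 i))) (a, 0) := (hM.sub hGd.neg).continuousAt
    have : ∀ᶠ p in nhds ((a, 0) : EuclideanSpace ℝ (Fin n) × (Fin m → ℝ)),
        p.2 i - (-(g p.1 0 i)) < 0 := hc.eventually (gt_mem_nhds (by simpa using ha i))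
    filter_upwards [this] with p hp
    simp only [cubicPhi, abs_of_neg hp, Pi.sub_apply, Pi.pow_apply, Pi.neg_apply]
    ring)
  refine hP2.congr_fderiv ?_
  refine ContinuousLinearMap.ext fun x => ?_
  simp
  ring

/-- If `J`, `g` are C² and `gᵢ(a,0) < 0` for every `i`, then
(i) the Jacobian of `(u,μ) ↦ ρ_a(0,u,μ)` at `(a,0)` is the block map
`(v,ν) ↦ (v, (−3 gᵢ(a,0)² νᵢ)ᵢ)` (blocks `Iₙ` and `0` in the first row,
lower-right block `diag(−3gᵢ(a,0)²)`), which is in particular nonsingular; and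
(ii) there exist `ε > 0` and C¹ functions `u`, `μ` on `[0, ε)` with `u(0) = a`,
`μ(0) = 0` and `ρ_a(λ, u(λ), μ(λ)) = 0` for all `λ ∈ [0, ε)`. -/
theorem homotopyMap_jacobian_at_start_and_local_zero_curve
    {n m : ℕ} (J : EuclideanSpace ℝ (Fin n) → ℝ)
    (g : EuclideanSpace ℝ (Fin n) → ℝ → Fin m → ℝ)
    (hJ : ContDiff ℝ 2 J)
    (hg : ∀ i, ContDiff ℝ 2 (fun q : EuclideanSpace ℝ (Fin n) × ℝ => g q.1 q.2 i))
    (a : EuclideanSpace ℝ (Fin n)) (ha : ∀ i, g a 0 i < 0) :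
    (∀ v : EuclideanSpace ℝ (Fin n), ∀ ν : Fin m → ℝ,
      fderiv ℝ (fun p : EuclideanSpace ℝ (Fin n) × (Fin m → ℝ) =>
          homotopyMap J g a 0 p.1 p.2) (a, 0) (v, ν)
        = (v, fun i => (-3 * (g a 0 i) ^ 2) * ν i)) ∧
    Function.Bijective
      (fderiv ℝ (fun p : EuclideanSpace ℝ (Fin n) × (Fin m → ℝ) =>
          homotopyMap J g a 0 p.1 p.2) (a, 0)) ∧
    ∃ ε > (0 : ℝ), ∃ u : ℝ → EuclideanSpace ℝ (Fin n), ∃ μ : ℝ → Fin m → ℝ,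
      ContDiffOn ℝ 1 u (Set.Ico 0 ε) ∧ ContDiffOn ℝ 1 μ (Set.Ico 0 ε) ∧
      u 0 = a ∧ μ 0 = 0 ∧
      ∀ lam ∈ Set.Ico (0 : ℝ) ε, homotopyMap J g a lam (u lam) (μ lam) = 0 := by
  have hD : HasFDerivAt (fun p : EuclideanSpace ℝ (Fin n) × (Fin m → ℝ) =>
      homotopyMap J g a 0 p.1 p.2)
      ((ContinuousLinearMap.fst ℝ (EuclideanSpace ℝ (Fin n)) (Fin m → ℝ)).prod
        (ContinuousLinearMap.pi fun i => ((-3 * (g a 0 i) ^ 2) •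
        ((ContinuousLinearMap.proj i : (Fin m → ℝ) →L[ℝ] ℝ) ∘L
        ContinuousLinearMap.snd ℝ (EuclideanSpace ℝ (Fin n)) (Fin m → ℝ))))) (a, 0) := by
    refine HasFDerivAt.prodMk ?_ (hasFDerivAt_pi.2 fun i => hm_comp_deriv g hg a ha i)
    have := (hasFDerivAt_fst (𝕜 := ℝ) (p := ((a, 0) :
      EuclideanSpace ℝ (Fin n) × (Fin m → ℝ)))).sub_const a
    simpa using this
  have hval : ∀ v : EuclideanSpace ℝ (Fin n), ∀ ν : Fin m → ℝ,
      fderiv ℝ (fun p : EuclideanSpace ℝ (Fin n) × (Fin m → ℝ) =>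
          homotopyMap J g a 0 p.1 p.2) (a, 0) (v, ν)
        = (v, fun i => (-3 * (g a 0 i) ^ 2) * ν i) := by
    intro v ν
    rw [hD.fderiv]
    rfl
  have hne : ∀ i, -3 * (g a 0 i) ^ 2 ≠ 0 := fun i =>
    mul_ne_zero (by norm_num) (pow_ne_zero _ (ha i).ne)
  refine ⟨hval, ⟨?_, ?_⟩, ?_⟩
  · rintro ⟨v, ν⟩ ⟨v', ν'⟩ h
    rw [hval, hval, Prod.mk.injEq] at h
    refine Prod.ext h.1 (funext fun i => ?_)
    exact mul_left_cancel₀ (hne i) (congrFun h.2 i)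
  · rintro ⟨v, ν⟩
    refine ⟨(v, fun i => ν i / (-3 * (g a 0 i) ^ 2)), ?_⟩
    rw [hval]
    refine Prod.ext rfl (funext fun i => ?_)
    exact mul_div_cancel₀ _ (hne i)
  · have hgrad : ContDiff ℝ 1 (gradient J) := by
      have h1 : ContDiff ℝ 1 (fderiv ℝ J) := hJ.fderiv_right (by norm_num)
      exact (InnerProductSpace.toDual ℝ (EuclideanSpace ℝ (Fin n))).symm.contDiff.comp h1
    let F : ℝ × EuclideanSpace ℝ (Fin n) → EuclideanSpace ℝ (Fin n) :=
      fun q => q.1 • gradient J q.2 + (1 - q.1) • (q.2 - a)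
    have hF : ContDiff ℝ 1 F := by
      have := hgrad.comp (contDiff_snd (𝕜 := ℝ) (E := ℝ) (F := EuclideanSpace ℝ (Fin n)))
      exact (contDiff_fst.smul this).add
        ((contDiff_const.sub contDiff_fst).smul (contDiff_snd.sub contDiff_const))
    have hFa := hF.contDiffAt (x := ((0 : ℝ), a))
    have hinr : fderiv ℝ F (0, a) ∘L .inr ℝ ℝ (EuclideanSpace ℝ (Fin n))
        = ContinuousLinearMap.id ℝ _ := by
      have h1 : HasFDerivAt (fun v : EuclideanSpace ℝ (Fin n) => F (0, v))
          (fderiv ℝ F (0, a) ∘L .inr ℝ ℝ (EuclideanSpace ℝ (Fin n))) a :=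
        HasFDerivAt.comp a (hF.differentiable (by norm_num) (0, a)).hasFDerivAt
          (hasFDerivAt_prodMk_right (𝕜 := ℝ) (0 : ℝ) a)
      refine h1.unique ?_
      have h2 := (hasFDerivAt_id (𝕜 := ℝ) a).sub_const a
      simpa [F] using h2
    have hinv : (fderiv ℝ F (0, a) ∘L .inr ℝ ℝ (EuclideanSpace ℝ (Fin n))).IsInvertible := by
      rw [hinr]
      exact ⟨ContinuousLinearEquiv.refl ℝ _, rfl⟩
    obtain ⟨ψ, hψ⟩ : ∃ ψ, ψ = hFa.implicitFunction one_ne_zero hinv := ⟨_, rfl⟩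
    have hψ0 : ψ 0 = a := hψ ▸ hFa.implicitFunction_apply_self one_ne_zero hinv
    have hψC : ContDiffAt ℝ 1 ψ 0 := hψ ▸ hFa.contDiffAt_implicitFunction one_ne_zero hinv
    have hψF : ∀ᶠ x in nhds (0 : ℝ), F (x, ψ x) = F (0, a) :=
      hψ ▸ hFa.eventually_apply_implicitFunction one_ne_zero hinv
    have hCe : ∀ᶠ x in nhds (0 : ℝ), ContDiffAt ℝ 1 ψ x := hψC.eventually (by simp)
    have hneg : ∀ᶠ x in nhds (0 : ℝ), ∀ i, g (ψ x) x i < 0 := by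
      refine Filter.eventually_all.2 fun i => ?_
      have hc : ContinuousAt (fun x => g (ψ x) x i) 0 :=
        ContinuousAt.comp (f := fun x => (ψ x, x))
          (g := fun q : EuclideanSpace ℝ (Fin n) × ℝ => g q.1 q.2 i)
          (hg i).continuous.continuousAt (hψC.continuousAt.prodMk continuousAt_id)
      exact hc.eventually (gt_mem_nhds (by simpa [hψ0] using ha i))
    obtain ⟨ε, hε, hb⟩ := Metric.eventually_nhds_iff.1 (hψF.and (hCe.and hneg))
    have hb' : ∀ x ∈ Set.Ico (0 : ℝ) ε, _ := fun x hx => hb (y := x) (by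
      rw [Real.dist_eq, sub_zero, abs_of_nonneg hx.1]; exact hx.2)
    refine ⟨ε, hε, ψ, fun _ => 0, fun x hx => (hb' x hx).2.1.contDiffWithinAt,
      contDiffOn_const, hψ0, rfl, fun x hx => ?_⟩
    obtain ⟨h1, -, h3⟩ := hb' x hx
    refine Prod.ext ?_ (funext fun i => ?_)
    · simpa [F, homotopyMap] using h1
    · have := h3 i
      simp only [homotopyMap, cubicPhi, Pi.zero_apply, Prod.snd_zero, sub_neg_eq_add, zero_add,
        abs_of_neg this]
      ring
end

section
/- Let q, p ∈ ℕ and let ρ: ℝ^q × ((0,1) × ℝ^p) → ℝ^p be twice continuously differentiable. Suppose 0 is a regular value of ρ, i.e., at every point (a, λ, y) with ρ(a, λ, y) = 0 the total derivative Dρ(a, λ, y): ℝ^{q+1+p} → ℝ^p is surjective. Then for Lebesgue-almost every a ∈ ℝ^q, 0 is a regular value of the section ρ_a := ρ(a, ·, ·): (0,1) × ℝ^p → ℝ^p, i.e., at every (λ, y) with ρ_a(λ, y) = 0 the derivative Dρ_a(λ, y): ℝ^{1+p} → ℝ^p is surjective. -/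
open MeasureTheory

namespace SardAux
open Metric Set Filter Topology Module

/-- Covering lemma. -/
lemma image_le {E F : Type*} [NormedAddCommGroup E] [NormedSpace ℝ E] [FiniteDimensional ℝ E]
    [MeasurableSpace E] [BorelSpace E] (μ : Measure E) [μ.IsAddHaarMeasure]
    [MeasurableSpace F] (ν : Measure F) (f : E → F) (S : Set E) (δ : ENNReal)
    (h : ∀ x ∈ S, ∀ᶠ ε in 𝓝[>] (0 : ℝ), ν (f '' closedBall x ε) ≤ δ * μ (closedBall x ε))
    (η : ENNReal) (hη : η ≠ 0) :
    ν (f '' S) ≤ δ * (μ S + η) := by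
  obtain ⟨t, r, tc, tS, hr, hcov, hsum⟩ := Besicovitch.exists_closedBall_covering_tsum_measure_le μ
    hη (fun x => {ε | ν (f '' closedBall x ε) ≤ δ * μ (closedBall x ε)}) S (by
      intro x hx d hd
      have h1 := h x hx
      have h2 : ∀ᶠ ε in 𝓝[>] (0 : ℝ), ε ∈ Ioo 0 d := Ioo_mem_nhdsGT hd
      obtain ⟨ε, h3, h4⟩ := (h1.and h2).exists
      exact ⟨ε, h3, h4⟩)
  have : Countable t := tc
  calc ν (f '' S) ≤ ν (⋃ x : t, f '' closedBall (x : E) (r x)) := by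
        apply measure_mono
        rw [← image_iUnion]
        apply image_mono
        rwa [iUnion_coe_set]
    _ ≤ ∑' x : t, ν (f '' closedBall (x : E) (r x)) := measure_iUnion_le _
    _ ≤ ∑' x : t, δ * μ (closedBall (x : E) (r x)) := ENNReal.tsum_le_tsum (fun x => hr x x.2)
    _ = δ * ∑' x : t, μ (closedBall (x : E) (r x)) := ENNReal.tsum_mul_left
    _ ≤ _ := by gcongr

lemma image_null_of_null {E F : Type*} [NormedAddCommGroup E] [NormedSpace ℝ E]
    [FiniteDimensional ℝ E]
    [MeasurableSpace E] [BorelSpace E] (μ : Measure E) [μ.IsAddHaarMeasure]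
    [MeasurableSpace F] (ν : Measure F) (f : E → F) (S : Set E) (hS : μ S = 0)
    (h : ∀ x ∈ S, ∃ K : ℕ, ∀ᶠ ε in 𝓝[>] (0 : ℝ),
      ν (f '' closedBall x ε) ≤ K * μ (closedBall x ε)) :
    ν (f '' S) = 0 := by
  have hsub : S ⊆ ⋃ K : ℕ, {x ∈ S | ∀ᶠ ε in 𝓝[>] (0 : ℝ),
      ν (f '' closedBall x ε) ≤ K * μ (closedBall x ε)} := by
    intro x hx
    obtain ⟨K, hK⟩ := h x hx
    exact mem_iUnion.2 ⟨K, hx, hK⟩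
  refine measure_mono_null (image_mono hsub) ?_
  rw [image_iUnion, measure_iUnion_null_iff]
  intro K
  refine le_antisymm (ENNReal.le_of_forall_pos_le_add fun e he _ => ?_) bot_le
  have h0 : μ {x ∈ S | ∀ᶠ ε in 𝓝[>] (0 : ℝ),
      ν (f '' closedBall x ε) ≤ K * μ (closedBall x ε)} = 0 :=
    measure_mono_null (sep_subset _ _) hS
  have := image_le μ ν f {x ∈ S | ∀ᶠ ε in 𝓝[>] (0 : ℝ),
      ν (f '' closedBall x ε) ≤ K * μ (closedBall x ε)} K (fun x hx => hx.2) ((e : ENNReal) / (K + 1))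
    (ENNReal.div_pos (by simpa using he.ne') (by simp)).ne'
  refine this.trans ?_
  rw [h0, zero_add, zero_add]
  calc (K : ENNReal) * (e / (K + 1)) ≤ (K + 1) * (e / (K + 1)) := by gcongr; simp
    _ = e := ENNReal.mul_div_cancel (by simp) (by simp)

lemma image_null_of_little {E F : Type*} [NormedAddCommGroup E] [NormedSpace ℝ E]
    [FiniteDimensional ℝ E]
    [MeasurableSpace E] [BorelSpace E] (μ : Measure E) [μ.IsAddHaarMeasure]
    [MeasurableSpace F] (ν : Measure F) (f : E → F) (S : Set E)
    (h : ∀ x ∈ S, ∀ K : ℕ, ∀ᶠ ε in 𝓝[>] (0 : ℝ),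
      ν (f '' closedBall x ε) ≤ (K + 1 : ENNReal)⁻¹ * μ (closedBall x ε)) :
    ν (f '' S) = 0 := by
  have hsub : S ⊆ ⋃ n : ℕ, (S ∩ closedBall 0 n) := by
    rw [← inter_iUnion, iUnion_closedBall_nat, inter_univ]
  refine measure_mono_null (image_mono hsub) ?_
  rw [image_iUnion, measure_iUnion_null_iff]
  intro n
  have hfin : μ (S ∩ closedBall 0 n) + 1 ≠ ⊤ := by
    simpa using (measure_mono_top (inter_subset_right)).mt measure_closedBall_lt_top.ne
  have hle : ∀ K : ℕ, ν (f '' (S ∩ closedBall 0 n)) ≤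
      (K + 1 : ENNReal)⁻¹ * (μ (S ∩ closedBall 0 n) + 1) :=
    fun K => image_le μ ν f _ _ (fun x hx => h x hx.1 K) 1 one_ne_zero
  have ht : Tendsto (fun K : ℕ => ((K : ENNReal) + 1)⁻¹ * (μ (S ∩ closedBall 0 n) + 1)) atTop
      (𝓝 (0 * (μ (S ∩ closedBall 0 n) + 1))) := by
    refine ENNReal.Tendsto.mul_const ?_ (Or.inr hfin)
    have := (tendsto_add_atTop_iff_nat (f := fun n : ℕ => (n : ENNReal)⁻¹) 1).2
      ENNReal.tendsto_inv_nat_nhds_zero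
    simpa using this
  rw [zero_mul] at ht
  exact le_antisymm (ge_of_tendsto' ht hle) bot_le

/-- Fubini bound. -/
lemma fubini_bound {F G : Type*} [NormedAddCommGroup F] [NormedSpace ℝ F] [FiniteDimensional ℝ F]
    [MeasurableSpace F] [BorelSpace F] (ν : Measure F) [ν.IsAddHaarMeasure]
    [NormedAddCommGroup G] [NormedSpace ℝ G] [FiniteDimensional ℝ G]
    [MeasurableSpace G] [BorelSpace G] (γ : Measure G) [γ.IsAddHaarMeasure]
    (T : F ≃L[ℝ] ℝ × G) :
    ∃ c : NNReal, ∀ S : Set F, IsCompact S → ∀ d : ℝ,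
      (∀ y ∈ S, ∀ y' ∈ S, (T y).2 = (T y').2 → |(T y).1 - (T y').1| ≤ d) →
      ν S ≤ c * ENNReal.ofReal d * γ ((fun y => (T y).2) '' S) := by
  have : ProperSpace G := FiniteDimensional.proper_real G
  have : SecondCountableTopology G := inferInstance
  have hm : (ν.map T).IsAddHaarMeasure := T.isAddHaarMeasure_map ν
  obtain ⟨c, hcc⟩ : ∃ c : NNReal, ν.map T = c • ((volume : Measure ℝ).prod γ) :=
    ⟨_, Measure.isAddLeftInvariant_eq_smul (ν.map T) ((volume : Measure ℝ).prod γ)⟩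
  refine ⟨c * 2, fun S hS d hd => ?_⟩
  have h1 : ν S = (ν.map T) (T '' S) := by
    have he : MeasurableEmbedding T := T.toHomeomorph.measurableEmbedding
    rw [he.map_apply]
    congr 1
    exact (T.injective.preimage_image S).symm
  have hc : IsCompact (T '' S) := hS.image T.continuous
  have hB : MeasurableSet ((fun y => (T y).2) '' S) :=
    (hS.image (by fun_prop)).measurableSet
  rw [h1, hcc,
    Measure.smul_apply, Measure.prod_apply_symm hc.measurableSet]
  have h2 : ∀ g : G, volume ((fun x : ℝ => (x, g)) ⁻¹' (T '' S)) ≤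
      ((fun y => (T y).2) '' S).indicator (fun _ => ENNReal.ofReal (2 * d)) g := by
    intro g
    by_cases hg : g ∈ (fun y => (T y).2) '' S
    · rw [indicator_of_mem hg]
      obtain ⟨y, hy, rfl⟩ := hg
      refine (measure_mono (t := closedBall (T y).1 d) ?_).trans (by rw [Real.volume_closedBall])
      rintro s ⟨y', hy', h⟩
      have := hd y' hy' y hy (by rw [h])
      rw [h] at this
      simpa [Real.dist_eq] using this
    · have : (fun x : ℝ => (x, g)) ⁻¹' (T '' S) = ∅ := by
        ext s
        simp only [mem_preimage, mem_image, mem_empty_iff_false, iff_false]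
        rintro ⟨y, hy, h⟩
        exact hg ⟨y, hy, by simp [h]⟩
      simp [this]
  calc _ ≤ _ • ∫⁻ g, ((fun y => (T y).2) '' S).indicator (fun _ => ENNReal.ofReal (2 * d)) g ∂γ := by
        gcongr with g
        exact h2 g
    _ = _ := by
        rw [lintegral_indicator hB, lintegral_const, ENNReal.ofReal_mul (by norm_num)]
        simp [ENNReal.smul_def, mul_assoc]

structure Reg {E F : Type*} [NormedAddCommGroup E] [NormedSpace ℝ E]
    [NormedAddCommGroup F] [NormedSpace ℝ F] (f : E → F) (D : E → E →L[ℝ] F) (x : E) (r M : ℝ) :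
    Prop where
  rpos : 0 < r
  Mnn : 0 ≤ M
  der : ∀ z ∈ closedBall x r, HasFDerivAt f (D z) z
  lip : ∀ z ∈ closedBall x r, ∀ z' ∈ closedBall x r, ‖D z - D z'‖ ≤ M * ‖z - z'‖

section
variable {E F G : Type*} [NormedAddCommGroup E] [NormedSpace ℝ E]
    [NormedAddCommGroup F] [NormedSpace ℝ F] [NormedAddCommGroup G] [NormedSpace ℝ G]
    {f : E → F} {D : E → E →L[ℝ] F} {x : E} {r M : ℝ}

lemma Reg.comp (h : Reg f D x r M) (L : F →L[ℝ] G) :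
    Reg (fun z => L (f z)) (fun z => L.comp (D z)) x r (‖L‖ * M) where
  rpos := h.rpos
  Mnn := mul_nonneg (norm_nonneg _) h.Mnn
  der _ hz := L.hasFDerivAt.comp _ (h.der _ hz)
  lip z hz z1 hz1 := by
    rw [← ContinuousLinearMap.comp_sub, mul_assoc]
    exact (L.opNorm_comp_le _).trans (mul_le_mul_of_nonneg_left (h.lip z hz z1 hz1) (norm_nonneg _))

lemma Reg.near (h : Reg f D x r M) {ε : ℝ} (hε : ε ≤ r) {z : E} (hz : z ∈ closedBall x ε) :
    ‖D z - D x‖ ≤ M * ε := by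
  refine (h.lip z (closedBall_subset_closedBall hε hz) x (mem_closedBall_self h.rpos.le)).trans ?_
  exact mul_le_mul_of_nonneg_left (mem_closedBall_iff_norm.1 hz) h.Mnn

lemma Reg.approx (h : Reg f D x r M) {ε : ℝ} (hε : ε ≤ r) {y y' : E} (hy : y ∈ closedBall x ε)
    (hy' : y' ∈ closedBall x ε) : ‖f y' - f y - D x (y' - y)‖ ≤ M * ε * ‖y' - y‖ :=
  Convex.norm_image_sub_le_of_norm_hasFDerivWithin_le'
    (fun z hz => (h.der z (closedBall_subset_closedBall hε hz)).hasFDerivWithinAt)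
    (fun z hz => h.near hε hz) (convex_closedBall x ε) hy hy'

lemma Reg.cont (h : Reg f D x r M) {ε : ℝ} (hε : ε ≤ r) : ContinuousOn f (closedBall x ε) :=
  fun z hz => (h.der z (closedBall_subset_closedBall hε hz)).continuousAt.continuousWithinAt

lemma ev_small {r : ℝ} (hr : 0 < r) : ∀ᶠ ε in 𝓝[>] (0 : ℝ), 0 < ε ∧ ε ≤ r :=
  Ioc_mem_nhdsGT hr

lemma Reg.lipBound [FiniteDimensional ℝ F] [MeasurableSpace F] [BorelSpace F] (ν : Measure F)
    [ν.IsAddHaarMeasure] (h : Reg f D x r M) :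
    ∃ C : ℝ, 0 ≤ C ∧ ∀ᶠ ε in 𝓝[>] (0 : ℝ),
      ν (f '' closedBall x ε) ≤ ENNReal.ofReal (C * ε ^ finrank ℝ F) := by
  set L := ‖D x‖ + M with hL
  have hL0 : 0 ≤ L := add_nonneg (norm_nonneg _) h.Mnn
  refine ⟨L ^ finrank ℝ F * (ν (ball 0 1)).toReal, by positivity, ?_⟩
  filter_upwards [ev_small h.rpos, ev_small one_pos] with ε ⟨h0, h1⟩ ⟨_, h2⟩
  have hsub : f '' closedBall x ε ⊆ closedBall (f x) (L * ε) := by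
    rintro _ ⟨y, hy, rfl⟩
    have h3 := h.approx h1 (mem_closedBall_self h0.le) hy
    have h4 := (D x).le_opNorm (y - x)
    have h5 : ‖y - x‖ ≤ ε := mem_closedBall_iff_norm.1 hy
    rw [mem_closedBall_iff_norm]
    calc ‖f y - f x‖ = ‖(f y - f x - D x (y - x)) + D x (y - x)‖ := by simp
      _ ≤ M * ε * ‖y - x‖ + ‖D x‖ * ‖y - x‖ := (norm_add_le _ _).trans (add_le_add h3 h4)
      _ ≤ M * 1 * ε + ‖D x‖ * ε := by have := h.Mnn; gcongr
      _ = L * ε := by rw [hL]; ring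
  refine (measure_mono hsub).trans ?_
  rw [Measure.addHaar_closedBall _ _ (by positivity)]
  rw [mul_pow, mul_right_comm, ENNReal.ofReal_mul (p := L ^ finrank ℝ F * ε ^ finrank ℝ F)
    (by positivity), ENNReal.ofReal_toReal measure_ball_lt_top.ne]

lemma exists_split [FiniteDimensional ℝ F] (A : E →L[ℝ] F) (hA : ¬ Function.Surjective A) :
    ∃ (l : F →L[ℝ] ℝ) (T : F ≃L[ℝ] ℝ × l.ker), (∀ y, (T y).1 = l y) ∧ (∀ x, l (A x) = 0) ∧
      finrank ℝ F = finrank ℝ l.ker + 1 := by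
  have hlt : LinearMap.range (A : E →ₗ[ℝ] F) < ⊤ := by
    rw [lt_top_iff_ne_top]
    intro h
    exact hA (LinearMap.range_eq_top.1 h)
  obtain ⟨l, hl, hker⟩ := Submodule.exists_le_ker_of_lt_top _ hlt
  obtain ⟨v, hv⟩ : ∃ v, l v ≠ 0 := by
    by_contra! hc
    exact hl (LinearMap.ext hc)
  have T := ContinuousLinearEquiv.equivOfRightInverse (LinearMap.toContinuousLinearMap l)
    (ContinuousLinearMap.toSpanSingleton ℝ ((l v)⁻¹ • v)) (fun s => by simp [hv])
  refine ⟨LinearMap.toContinuousLinearMap l,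
    ContinuousLinearEquiv.equivOfRightInverse (LinearMap.toContinuousLinearMap l)
    (ContinuousLinearMap.toSpanSingleton ℝ ((l v)⁻¹ • v)) (fun s => by simp [hv]),
    fun y => rfl, fun x => hker ⟨x, rfl⟩, ?_⟩
  rw [T.toLinearEquiv.finrank_eq, finrank_prod, finrank_self, add_comm]

/-- general slicing estimate -/
lemma slice_bound [FiniteDimensional ℝ E] [FiniteDimensional ℝ F] [MeasurableSpace F]
    [BorelSpace F]
    (ν : Measure F) [ν.IsAddHaarMeasure] [FiniteDimensional ℝ G]
    [MeasurableSpace G] [BorelSpace G] (γ : Measure G) [γ.IsAddHaarMeasure]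
    (T : F ≃L[ℝ] ℝ × G) (h : Reg f D x r M) {C : ℝ} (hC : 0 ≤ C) {k : ℕ}
    (hb : ∀ᶠ ε in 𝓝[>] (0 : ℝ),
      γ ((fun z => (T (f z)).2) '' closedBall x ε) ≤ ENNReal.ofReal (C * ε ^ k)) :
    ∃ c : ℝ, 0 ≤ c ∧ ∀ d : ℝ, 0 ≤ d →
      (∀ᶠ ε in 𝓝[>] (0 : ℝ), ∀ y ∈ closedBall x ε, ∀ y' ∈ closedBall x ε,
        (T (f y)).2 = (T (f y')).2 → |(T (f y)).1 - (T (f y')).1| ≤ d * ε ^ 2) →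
      ∀ᶠ ε in 𝓝[>] (0 : ℝ), ν (f '' closedBall x ε) ≤ ENNReal.ofReal (c * d * ε ^ (k + 2)) := by
  have : ProperSpace E := FiniteDimensional.proper_real E
  obtain ⟨c, hc⟩ := fubini_bound ν γ T
  refine ⟨c * C, by positivity, fun d hd hs => ?_⟩
  filter_upwards [hb, hs, ev_small h.rpos] with ε h1 h2 ⟨h3, h4⟩
  have h5 := hc (f '' closedBall x ε) ((isCompact_closedBall x ε).image_of_continuousOn (h.cont h4))
    (d * ε ^ 2) (by
      rintro _ ⟨y, hy, rfl⟩ _ ⟨y', hy', rfl⟩ hh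
      exact h2 y hy y' hy' hh)
  rw [image_image] at h5
  calc _ ≤ _ := h5
    _ ≤ c * ENNReal.ofReal (d * ε ^ 2) * ENNReal.ofReal (C * ε ^ k) := by gcongr
    _ = _ := by
      rw [← ENNReal.ofReal_coe_nnreal, ← ENNReal.ofReal_mul (by positivity),
        ← ENNReal.ofReal_mul (by positivity)]
      congr 1
      ring

/-- the trivial fibre estimate -/
lemma Reg.fibre (h : Reg f D x r M) (l : F →L[ℝ] ℝ) (hl : ∀ v, l (D x v) = 0) :
    ∃ d : ℝ, 0 ≤ d ∧ ∀ᶠ ε in 𝓝[>] (0 : ℝ), ∀ y ∈ closedBall x ε, ∀ y' ∈ closedBall x ε,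
      |l (f y) - l (f y')| ≤ d * ε ^ 2 := by
  have h' := h.comp l
  refine ⟨‖l‖ * M * 2, by have := h.Mnn; positivity, ?_⟩
  filter_upwards [ev_small h.rpos] with ε ⟨h0, h1⟩ y hy y' hy'
  have h2 := h'.approx h1 hy' hy
  simp only [ContinuousLinearMap.comp_apply, hl, sub_zero, Real.norm_eq_abs] at h2
  have h3 : ‖y - y'‖ ≤ 2 * ε := by
    rw [← dist_eq_norm]
    linarith [dist_triangle_right y y' x, mem_closedBall.1 hy, mem_closedBall.1 hy']
  calc _ ≤ _ := h2
    _ ≤ ‖l‖ * M * ε * (2 * ε) := by have := h'.Mnn; gcongr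
    _ = _ := by ring

lemma Reg.critBound [FiniteDimensional ℝ E] [FiniteDimensional ℝ F] [MeasurableSpace F]
    [BorelSpace F] (ν : Measure F)
    [ν.IsAddHaarMeasure] (h : Reg f D x r M) (hx : ¬ Function.Surjective (D x)) :
    ∃ C : ℝ, 0 ≤ C ∧ ∀ᶠ ε in 𝓝[>] (0 : ℝ),
      ν (f '' closedBall x ε) ≤ ENNReal.ofReal (C * ε ^ (finrank ℝ F + 1)) := by
  obtain ⟨l, T, hT, hl, hfr⟩ := exists_split (D x) hx
  let τ : F →L[ℝ] l.ker := (ContinuousLinearMap.snd ℝ ℝ l.ker).comp (T : F →L[ℝ] ℝ × l.ker)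
  obtain ⟨C, hC, hb⟩ := (h.comp τ).lipBound (Measure.addHaar : Measure l.ker)
  obtain ⟨c, hc, hcd⟩ := slice_bound ν Measure.addHaar T h hC hb
  obtain ⟨d, hd, hdf⟩ := h.fibre l hl
  refine ⟨c * d, by positivity, ?_⟩
  rw [hfr]
  refine hcd d hd ?_
  filter_upwards [hdf] with ε h1 y hy y' hy' _
  rw [hT, hT]
  exact h1 y hy y' hy'

end

section
variable {E F G : Type*} [NormedAddCommGroup E] [NormedSpace ℝ E]
    [NormedAddCommGroup F] [NormedSpace ℝ F] [NormedAddCommGroup G] [NormedSpace ℝ G]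
    {f : E → F} {D : E → E →L[ℝ] F} {x : E} {r M : ℝ}

/-- derivative along the kernel at a nearby critical point -/
lemma crit_kernel [FiniteDimensional ℝ G] (h : Reg f D x r M) (l : F →L[ℝ] ℝ) (τ : F →L[ℝ] G)
    (hinj : ∀ y, l y = 0 → τ y = 0 → y = 0)
    (hl : ∀ v, l (D x v) = 0) (R : G →L[ℝ] E) (hR : ∀ g, τ (D x (R g)) = g)
    {s : ℝ} (hs : s ≤ r) (hsm : ‖τ‖ * M * s * ‖R‖ ≤ 1 / 2) {z : E} (hz : z ∈ closedBall x s)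
    (hcrit : ¬ Function.Surjective (D z)) {k : E} (hk : τ (D x k) = 0) :
    |l (D z k)| ≤ ‖l‖ * M * s * (‖R‖ * (2 * (‖τ‖ * M * s * ‖k‖))) := by
  have hs0 : 0 ≤ s := nonempty_closedBall.1 ⟨z, hz⟩
  have hMτ : 0 ≤ ‖τ‖ * M * s := by have := h.Mnn; positivity
  have hMl : 0 ≤ ‖l‖ * M * s := by have := h.Mnn; positivity
  have hτ : ∀ v, ‖τ (D z v) - τ (D x v)‖ ≤ ‖τ‖ * M * s * ‖v‖ := fun v =>
    (ContinuousLinearMap.le_of_opNorm_le _ ((h.comp τ).near hs hz) v)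
  have hlz : ∀ v, |l (D z v)| ≤ ‖l‖ * M * s * ‖v‖ := fun v => by
    have := ContinuousLinearMap.le_of_opNorm_le _ ((h.comp l).near hs hz) v
    simpa [hl] using this
  -- the map `τ ∘ D z ∘ R` is invertible
  have hanti : ∀ g, ‖g‖ ≤ 2 * ‖τ (D z (R g))‖ := fun g => by
    have h1 := hτ (R g)
    rw [hR] at h1
    have h2 : ‖τ‖ * M * s * ‖R g‖ ≤ 1 / 2 * ‖g‖ := by
      calc _ ≤ ‖τ‖ * M * s * (‖R‖ * ‖g‖) := by gcongr; exact R.le_opNorm g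
        _ = ‖τ‖ * M * s * ‖R‖ * ‖g‖ := by ring
        _ ≤ _ := by gcongr
    have h3 : ‖g‖ ≤ ‖τ (D z (R g)) - g‖ + ‖τ (D z (R g))‖ := by
      rw [norm_sub_rev]
      simpa using norm_add_le (g - τ (D z (R g))) (τ (D z (R g)))
    linarith
  let S : G →ₗ[ℝ] G := ((τ.comp ((D z).comp R)) : G →L[ℝ] G)
  have hSi : Function.Injective S := by
    rw [injective_iff_map_eq_zero]
    intro g hg
    have h1 := hanti g
    have h2 : τ (D z (R g)) = 0 := hg
    rw [h2] at h1
    simpa using h1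
  have hSs : ∀ g, ∃ g', τ (D z (R g')) = g := LinearMap.injective_iff_surjective.1 hSi
  obtain ⟨g, hg⟩ := hSs (τ (D z k))
  have hlk : l (D z k) = l (D z (R g)) := by
    by_contra hne
    apply hcrit
    intro y
    -- direction `k - R g`
    set a := l (D z k) - l (D z (R g)) with ha
    have ha0 : a ≠ 0 := sub_ne_zero.2 hne
    obtain ⟨g', hg'⟩ := hSs (τ y)
    refine ⟨R g' + ((l y - l (D z (R g'))) / a) • (k - R g), ?_⟩
    rw [← sub_eq_zero]
    apply hinj
    · simp only [map_sub, map_add, map_smul, smul_eq_mul, ← ha]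
      field_simp
      ring
    · simp [map_sub, map_add, map_smul, hg', hg]
  rw [hlk]
  have hkk := hτ k
  rw [hk, sub_zero] at hkk
  calc _ ≤ _ := hlz (R g)
    _ ≤ ‖l‖ * M * s * (‖R‖ * (2 * (‖τ‖ * M * s * ‖k‖))) := by
      gcongr
      refine (R.le_opNorm g).trans ?_
      gcongr
      refine (hanti g).trans ?_
      rw [hg]
      gcongr

lemma Reg.littleFibre [FiniteDimensional ℝ G] (h : Reg f D x r M) (l : F →L[ℝ] ℝ) (τ : F →L[ℝ] G)
    (hinj : ∀ y, l y = 0 → τ y = 0 → y = 0)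
    (hl : ∀ v, l (D x v) = 0) (R : G →L[ℝ] E) (hR : ∀ g, τ (D x (R g)) = g)
    (C : Set E) (hC : ∀ z ∈ C, ¬ Function.Surjective (D z))
    (hdens : ∀ η : ℝ, 0 < η → ∀ᶠ ε in 𝓝[>] (0 : ℝ), ∀ z ∈ closedBall x ε, ∃ z' ∈ C,
      dist z' z ≤ η * ε) (δ : ℝ) (hδ : 0 < δ) :
    ∀ᶠ ε in 𝓝[>] (0 : ℝ), ∀ y ∈ closedBall x ε, ∀ y' ∈ closedBall x ε,
      τ (f y) = τ (f y') → |l (f y) - l (f y')| ≤ δ * ε ^ 2 := by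
  have hM := h.Mnn
  obtain ⟨K1, hK1⟩ : ∃ K1, K1 = 2 + 2 * ‖R‖ * (‖τ‖ * M) := ⟨_, rfl⟩
  have hK1p : 0 < K1 := by rw [hK1]; positivity
  obtain ⟨K2, hK2⟩ : ∃ K2, K2 = ‖l‖ * M * 2 * (‖R‖ * (2 * (‖τ‖ * M * 2 * K1))) := ⟨_, rfl⟩
  have hK2p : 0 ≤ K2 := by rw [hK2]; positivity
  obtain ⟨K3, hK3⟩ : ∃ K3, K3 = ‖l‖ * M * K1 := ⟨_, rfl⟩
  have hK3p : 0 ≤ K3 := by rw [hK3]; positivity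
  obtain ⟨η, hη⟩ : ∃ η, η = min 1 (δ / (3 * (K3 + 1))) := ⟨_, rfl⟩
  have hηp : 0 < η := by rw [hη]; positivity
  have hη1 : η ≤ 1 := by rw [hη]; exact min_le_left _ _
  have hη2 : K3 * η ≤ δ / 3 := by
    have : η ≤ δ / (3 * (K3 + 1)) := by rw [hη]; exact min_le_right _ _
    rw [le_div_iff₀ (by positivity)] at this
    nlinarith
  filter_upwards [hdens η hηp, ev_small (half_pos h.rpos), ev_small one_pos,
    ev_small (r := δ / (3 * (K3 + 1))) (by positivity),
    ev_small (r := δ / (3 * (K2 + 1))) (by positivity),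
    ev_small (r := 1 / (4 * (‖τ‖ * M * ‖R‖ + 1))) (by positivity)] with ε hd ⟨h0, h1⟩ ⟨_, h2⟩
    ⟨_, h3⟩ ⟨_, h4⟩ ⟨_, h5⟩ y hy y' hy' hyy
  have h3' : K3 * ε ≤ δ / 3 := by
    rw [le_div_iff₀ (by positivity)] at h3
    nlinarith
  have h4' : K2 * ε ≤ δ / 3 := by
    rw [le_div_iff₀ (by positivity)] at h4
    nlinarith
  have h5' : ‖τ‖ * M * (2 * ε) * ‖R‖ ≤ 1 / 2 := by
    rw [le_div_iff₀ (by positivity)] at h5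
    nlinarith
  have hεr : ε ≤ r := by linarith [h.rpos]
  have hv : ‖y - y'‖ ≤ 2 * ε := by
    rw [← dist_eq_norm]
    linarith [dist_triangle_right y y' x, mem_closedBall.1 hy, mem_closedBall.1 hy']
  set v := y - y' with hvdef
  have hAv : ‖τ (D x v)‖ ≤ ‖τ‖ * M * ε * (2 * ε) := by
    have h6 := (h.comp τ).approx hεr hy' hy
    simp only [hyy, sub_self, zero_sub, norm_neg, ContinuousLinearMap.comp_apply] at h6
    exact h6.trans (by gcongr)
  set w := R (τ (D x v)) with hw
  have hwn : ‖w‖ ≤ K1 * ε ^ 2 := by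
    calc ‖w‖ ≤ ‖R‖ * (‖τ‖ * M * ε * (2 * ε)) := (R.le_opNorm _).trans (by gcongr)
      _ ≤ K1 * ε ^ 2 := by rw [hK1]; nlinarith [sq_nonneg ε]
  have hkn : ‖v - w‖ ≤ K1 * ε := by
    calc ‖v - w‖ ≤ ‖v‖ + ‖w‖ := norm_sub_le _ _
      _ ≤ 2 * ε + ‖R‖ * (‖τ‖ * M * ε * (2 * ε)) :=
        add_le_add hv ((R.le_opNorm _).trans (by gcongr))
      _ ≤ 2 * ε + ‖R‖ * (‖τ‖ * M * 1 * (2 * ε)) := by gcongr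
      _ = K1 * ε := by rw [hK1]; ring
  have hk0 : τ (D x (v - w)) = 0 := by simp [hw, hR]
  have hbound : ∀ z ∈ closedBall x ε, |l (D z v)| ≤ δ * ε ^ 2 := by
    intro z hz
    obtain ⟨z', hz', hzz⟩ := hd z hz
    have hz2 : z' ∈ closedBall x (2 * ε) := by
      rw [mem_closedBall] at hz ⊢
      have : η * ε ≤ ε := by nlinarith
      linarith [dist_triangle z' z x]
    have e1 : |l (D z w)| ≤ ‖l‖ * M * ε * ‖w‖ := by
      simpa [hl] using ContinuousLinearMap.le_of_opNorm_le _ ((h.comp l).near hεr hz) w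
    have e2 := crit_kernel h l τ hinj hl R hR (by linarith) h5' hz2 (hC z' hz') hk0
    have e3 : |l (D z (v - w)) - l (D z' (v - w))| ≤ ‖l‖ * M * ‖z - z'‖ * ‖v - w‖ :=
      ContinuousLinearMap.le_of_opNorm_le _ ((h.comp l).lip z
        (closedBall_subset_closedBall hεr hz) z'
        (closedBall_subset_closedBall (by linarith) hz2)) (v - w)
    have hzz' : ‖z - z'‖ ≤ η * ε := by rw [← dist_eq_norm, dist_comm]; exact hzz
    have e1' : |l (D z w)| ≤ K3 * ε * ε ^ 2 := by
      calc _ ≤ _ := e1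
        _ ≤ ‖l‖ * M * ε * (K1 * ε ^ 2) := by gcongr
        _ = _ := by rw [hK3]; ring
    have e2' : |l (D z' (v - w))| ≤ K2 * ε * ε ^ 2 := by
      calc _ ≤ _ := e2
        _ ≤ ‖l‖ * M * (2 * ε) * (‖R‖ * (2 * (‖τ‖ * M * (2 * ε) * (K1 * ε)))) := by gcongr
        _ = _ := by rw [hK2]; ring
    have e3' : |l (D z (v - w)) - l (D z' (v - w))| ≤ K3 * η * ε ^ 2 := by
      calc _ ≤ _ := e3
        _ ≤ ‖l‖ * M * (η * ε) * (K1 * ε) := by gcongr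
        _ = _ := by rw [hK3]; ring
    have e4 : l (D z v) = l (D z w) + l (D z' (v - w)) +
        (l (D z (v - w)) - l (D z' (v - w))) := by
      simp only [map_sub]; ring
    have hε2 : 0 ≤ ε ^ 2 := sq_nonneg ε
    calc |l (D z v)| ≤ K3 * ε * ε ^ 2 + K2 * ε * ε ^ 2 + K3 * η * ε ^ 2 := by
          rw [e4]
          exact (abs_add_le _ _).trans (add_le_add ((abs_add_le _ _).trans (add_le_add e1' e2')) e3')
      _ ≤ δ / 3 * ε ^ 2 + δ / 3 * ε ^ 2 + δ / 3 * ε ^ 2 := by gcongr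
      _ = _ := by ring
  have hseg : ∀ t ∈ Icc (0 : ℝ) 1, y' + t • v ∈ closedBall x ε := fun t ht =>
    (convex_closedBall x ε).add_smul_sub_mem hy' hy ht
  have hder : ∀ t ∈ Icc (0 : ℝ) 1, HasDerivWithinAt (fun t : ℝ => l (f (y' + t • v)))
      (l (D (y' + t • v) v)) (Icc (0 : ℝ) 1) t := by
    intro t ht
    have d1 : HasDerivAt (fun t : ℝ => y' + t • v) v t := by
      simpa using ((hasDerivAt_id t).smul_const v).const_add y'
    have d2 := (h.comp l).der (y' + t • v) (closedBall_subset_closedBall hεr (hseg t ht))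
    exact (d2.comp_hasDerivAt t d1).hasDerivWithinAt
  have := norm_image_sub_le_of_norm_deriv_le_segment_01' hder
    (fun t ht => hbound _ (hseg t (Ico_subset_Icc_self ht)))
  simpa [hvdef] using this

end

section
variable {E F : Type*} [NormedAddCommGroup E] [NormedSpace ℝ E] [FiniteDimensional ℝ E]
    [NormedAddCommGroup F] [NormedSpace ℝ F] [FiniteDimensional ℝ F]

def Dense' (S : Set E) (x : E) : Prop :=
  ∀ η : ℝ, 0 < η → ∀ᶠ ε in 𝓝[>] (0 : ℝ), ∀ z ∈ closedBall x ε, ∃ z' ∈ S, dist z' z ≤ η * ε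

lemma dense_ae [MeasurableSpace E] [BorelSpace E] (μ : Measure E) [μ.IsAddHaarMeasure]
    (S : Set E) : μ {x ∈ S | ¬ Dense' S x} = 0 := by
  have : ProperSpace E := FiniteDimensional.proper_real E
  have h : ∀ᵐ x ∂μ.restrict S, Dense' S x := by
    have h1 := ae_all_iff.2 (fun n : ℕ =>
      IsUnifLocDoublingMeasure.ae_tendsto_measure_inter_div μ S ((n : ℝ) + 1))
    filter_upwards [h1] with x hx η hη
    obtain ⟨n, hn⟩ := exists_nat_ge (1 / η)
    have hn' : 1 ≤ ((n : ℝ) + 1) * η := by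
      rw [div_le_iff₀ hη] at hn
      linarith
    have h2 := hx n (ι := ℝ × E)
      (l := comap Prod.fst (𝓝[>] (0 : ℝ)) ⊓ 𝓟 {p | p.2 ∈ closedBall x p.1})
      Prod.snd (fun p => η * p.1)
      (by
        have t1 : Tendsto (fun s : ℝ => η * s) (𝓝[>] 0) (𝓝[>] 0) := by
          refine tendsto_nhdsWithin_iff.2 ⟨?_, ?_⟩
          · have : Tendsto (fun s : ℝ => η * s) (𝓝 0) (𝓝 (η * 0)) :=
              tendsto_id.const_mul η
            rw [mul_zero] at this
            exact this.mono_left nhdsWithin_le_nhds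
          · filter_upwards [self_mem_nhdsWithin] with s hs
            exact mul_pos hη hs
        exact t1.comp (tendsto_comap.mono_left inf_le_left))
      (by
        rw [eventually_inf_principal]
        refine Eventually.of_forall fun p hp => ?_
        have hp' : dist p.2 x ≤ p.1 := hp
        have hp0 : 0 ≤ p.1 := dist_nonneg.trans hp'
        rw [mem_closedBall, dist_comm]
        calc dist p.2 x ≤ 1 * p.1 := by linarith
          _ ≤ ((n : ℝ) + 1) * η * p.1 := by gcongr
          _ = _ := by ring)
    have h3 := h2.eventually (lt_mem_nhds zero_lt_one)
    rw [eventually_inf_principal, eventually_comap] at h3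
    filter_upwards [h3] with ε hε z hz
    have h4 := hε (ε, z) rfl hz
    have h5 : μ (S ∩ closedBall z (η * ε)) ≠ 0 := by
      intro h0
      simp [h0] at h4
    obtain ⟨z', hz', hz''⟩ := nonempty_of_measure_ne_zero h5
    exact ⟨z', hz', hz''⟩
  refine measure_mono_null ?_ (le_antisymm ((Measure.le_restrict_apply S _).trans
    (ae_iff.1 h).le) bot_le)
  rintro x ⟨h1, h2⟩
  exact ⟨h2, h1⟩

lemma conv_bound [MeasurableSpace E] [BorelSpace E] (μ : Measure E) [μ.IsAddHaarMeasure] (x : E)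
    {k : ℕ} (hk : finrank ℝ E = k) {a e ε : ℝ} (ha : 0 ≤ a) (hε : 0 ≤ ε)
    (h : e ≤ a * (μ (ball 0 1)).toReal) :
    ENNReal.ofReal (e * ε ^ k) ≤ ENNReal.ofReal a * μ (closedBall x ε) := by
  rw [Measure.addHaar_closedBall _ _ hε, hk,
    ← ENNReal.ofReal_toReal (measure_ball_lt_top (μ := μ) (x := (0 : E)) (r := 1)).ne,
    ← ENNReal.ofReal_mul (by positivity), ← ENNReal.ofReal_mul ha]
  apply ENNReal.ofReal_le_ofReal
  calc e * ε ^ k ≤ a * (μ (ball 0 1)).toReal * ε ^ k := by gcongr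
    _ = _ := by ring

theorem sard [MeasurableSpace E] [BorelSpace E] (μ : Measure E) [μ.IsAddHaarMeasure]
    [MeasurableSpace F] [BorelSpace F] (ν : Measure F) [ν.IsAddHaarMeasure]
    (hdim : finrank ℝ E = finrank ℝ F + 1) (f : E → F) (D : E → E →L[ℝ] F) (S : Set E)
    (hreg : ∀ x ∈ S, ∃ r M, Reg f D x r M) (hcrit : ∀ x ∈ S, ¬ Function.Surjective (D x)) :
    ν (f '' S) = 0 := by
  have hβ : 0 < (μ (ball 0 1)).toReal :=
    ENNReal.toReal_pos (measure_ball_pos μ 0 one_pos).ne' measure_ball_lt_top.ne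
  set β := (μ (ball 0 1)).toReal with hβd
  have hsub : S ⊆ {x ∈ S | ¬ Dense' S x} ∪ {x ∈ S | Dense' S x} := by
    intro x hx
    by_cases h : Dense' S x
    · exact Or.inr ⟨hx, h⟩
    · exact Or.inl ⟨hx, h⟩
  refine measure_mono_null (image_mono hsub) ?_
  rw [image_union, measure_union_null_iff]
  constructor
  · refine image_null_of_null μ ν f _ (dense_ae μ S) ?_
    rintro x ⟨hx, -⟩
    obtain ⟨r, M, h⟩ := hreg x hx
    obtain ⟨C, hC, hb⟩ := h.critBound ν (hcrit x hx)
    obtain ⟨K, hK⟩ := exists_nat_ge (C / β)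
    refine ⟨K, ?_⟩
    filter_upwards [hb, ev_small one_pos] with ε h1 ⟨h2, _⟩
    refine h1.trans ?_
    rw [← ENNReal.ofReal_natCast]
    exact conv_bound μ x hdim (by positivity) h2.le ((div_le_iff₀ hβ).1 hK)
  · refine image_null_of_little μ ν f _ ?_
    rintro x ⟨hx, hdx⟩ K
    have hKr : ((K : ENNReal) + 1)⁻¹ = ENNReal.ofReal ((K : ℝ) + 1)⁻¹ := by
      rw [ENNReal.ofReal_inv_of_pos (by positivity), ENNReal.ofReal_add (by positivity) zero_le_one]
      simp
    rw [hKr]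
    have hK0 : 0 < ((K : ℝ) + 1)⁻¹ := by positivity
    set a := ((K : ℝ) + 1)⁻¹ with ha
    obtain ⟨r, M, h⟩ := hreg x hx
    obtain ⟨l, T, hT, hl, hfr⟩ := exists_split (D x) (hcrit x hx)
    let τ : F →L[ℝ] l.ker := (ContinuousLinearMap.snd ℝ ℝ l.ker).comp (T : F →L[ℝ] ℝ × l.ker)
    by_cases hs : Function.Surjective (τ.comp (D x))
    · obtain ⟨C, hC, hb⟩ := (h.comp τ).lipBound (Measure.addHaar : Measure l.ker)
      obtain ⟨c, hc, hcd⟩ := slice_bound ν Measure.addHaar T h hC hb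
      obtain ⟨R, hR⟩ := (τ.comp (D x)).exists_rightInverse_of_surjective
        (LinearMap.range_eq_top.2 hs)
      have hlf := h.littleFibre l τ (fun y h1 h2 => by
          apply T.injective
          rw [map_zero]
          exact Prod.ext (by rw [hT, h1]; rfl) h2) hl R
        (fun g => congrArg (fun L : l.ker →L[ℝ] l.ker => L g) hR) S hcrit hdx
        (a * β / (c + 1)) (by positivity)
      have := hcd (a * β / (c + 1)) (by positivity) (by
        filter_upwards [hlf] with ε h1 y hy y' hy' hh
        rw [hT, hT]
        exact h1 y hy y' hy' hh)
      filter_upwards [this, ev_small one_pos] with ε h1 ⟨h2, _⟩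
      refine h1.trans (conv_bound μ x (by rw [hdim, hfr]) hK0.le h2.le ?_)
      rw [mul_div_assoc', div_le_iff₀ (by positivity)]
      have : 0 ≤ a * β := by positivity
      nlinarith
    · obtain ⟨C, hC, hb⟩ := (h.comp τ).critBound (Measure.addHaar : Measure l.ker) hs
      obtain ⟨c, hc, hcd⟩ := slice_bound ν Measure.addHaar T h hC hb
      obtain ⟨d, hd, hdf⟩ := h.fibre l hl
      have := hcd d hd (by
        filter_upwards [hdf] with ε h1 y hy y' hy' _
        rw [hT, hT]
        exact h1 y hy y' hy')
      filter_upwards [this, ev_small (r := a * β / (c * d + 1)) (by positivity)] with ε h1 ⟨h2, h3⟩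
      have e : c * d * ε ^ (finrank ℝ l.ker + 1 + 2) =
        (c * d * ε) * ε ^ (finrank ℝ l.ker + 1 + 1) := by ring
      rw [e] at h1
      refine h1.trans (conv_bound μ x (by rw [hdim, hfr]) hK0.le h2.le ?_)
      rw [le_div_iff₀ (by positivity)] at h3
      nlinarith

lemma reg_of_contDiffAt {f : E → F} {x : E} (h : ContDiffAt ℝ 2 f x) :
    ∃ r M, Reg f (fderiv ℝ f) x r M := by
  have h1 : ContDiffAt ℝ 1 (fderiv ℝ f) x := h.fderiv_right (by norm_num)
  obtain ⟨K, t, ht, hK⟩ := h1.exists_lipschitzOnWith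
  have h2 : ∀ᶠ z in 𝓝 x, ContDiffAt ℝ 2 f z := h.eventually (by simp)
  obtain ⟨r, hr, hsub⟩ := nhds_basis_closedBall.mem_iff.1 (inter_mem ht h2)
  refine ⟨r, K, hr, K.2, fun z hz => ?_, fun z hz z' hz' => ?_⟩
  · have h3 : ContDiffAt ℝ 2 f z := (hsub hz).2
    exact (h3.differentiableAt (by norm_num)).hasFDerivAt
  · rw [← dist_eq_norm, ← dist_eq_norm]
    exact hK.dist_le_mul z (hsub hz).1 z' (hsub hz').1
end

end SardAux

namespace SardAux
open Metric Set Filter Topology Module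

lemma local_null {q p : ℕ} (ρ : (Fin q → ℝ) × (ℝ × (Fin p → ℝ)) → Fin p → ℝ)
    (z₀ : (Fin q → ℝ) × (ℝ × (Fin p → ℝ))) (hρ : ContDiffAt ℝ 2 ρ z₀)
    (hs : Function.Surjective (fderiv ℝ ρ z₀))
    (Z : Set ((Fin q → ℝ) × (ℝ × (Fin p → ℝ))))
    (hZd : ∀ z ∈ Z, DifferentiableAt ℝ ρ z)
    (hZr : ∀ z ∈ Z, Function.Surjective (fderiv ℝ ρ z))
    (hZ0 : ∀ z ∈ Z, ρ z = 0)
    (hZs : ∀ z ∈ Z, ¬ Function.Surjective (fderiv ℝ (fun w => ρ (z.1, w)) z.2)) :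
    ∃ u ∈ 𝓝[Z] z₀, (volume : Measure (Fin q → ℝ)) (Prod.fst '' u) = 0 := by
  obtain ⟨R, hR⟩ := (fderiv ℝ ρ z₀).exists_rightInverse_of_surjective (LinearMap.range_eq_top.2 hs)
  have hR' : Function.RightInverse R (fderiv ℝ ρ z₀) := fun v =>
    congrArg (fun L : (Fin p → ℝ) →L[ℝ] (Fin p → ℝ) => L v) hR
  set A := fderiv ℝ ρ z₀ with hA
  set T := ContinuousLinearEquiv.equivOfRightInverse A R hR' with hT
  set Φ : (Fin q → ℝ) × (ℝ × (Fin p → ℝ)) → (Fin p → ℝ) × A.ker :=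
    fun z => (ρ z, A.projKerOfRightInverse R hR' z) with hΦ
  have hΦc : ContDiffAt ℝ 2 Φ z₀ :=
    hρ.prodMk (A.projKerOfRightInverse R hR').contDiff.contDiffAt
  have hΦd : HasFDerivAt Φ (T : _ →L[ℝ] (Fin p → ℝ) × A.ker) z₀ :=
    (hρ.differentiableAt (by norm_num)).hasFDerivAt.prodMk
      (A.projKerOfRightInverse R hR').hasFDerivAt
  set e := hΦc.toOpenPartialHomeomorph Φ hΦd (by norm_num) with he
  have hec : ∀ z, e z = Φ z := fun z => rfl
  have hz₀ : z₀ ∈ e.source := hΦc.mem_toOpenPartialHomeomorph_source hΦd (by norm_num)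
  have hsymm : ContDiffAt ℝ 2 e.symm (e z₀) := hΦc.to_localInverse hΦd (by norm_num)
  have hdim : finrank ℝ A.ker = finrank ℝ (Fin q → ℝ) + 1 := by
    have := T.toLinearEquiv.finrank_eq
    simp only [finrank_prod, finrank_self, finrank_fin_fun] at this ⊢
    omega
  let f : A.ker → Fin q → ℝ := fun k => (e.symm (0, k)).1
  let S : Set A.ker := {k | ((0 : Fin p → ℝ), k) ∈ e.target ∧ ContDiffAt ℝ 2 e.symm (0, k) ∧
    e.symm (0, k) ∈ Z}
  have hψ : ∀ k ∈ S, ContDiffAt ℝ 2 (fun k : A.ker => e.symm (0, k)) k := fun k hk =>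
    hk.2.1.comp k (contDiffAt_const.prodMk contDiffAt_id)
  have hnull : (volume : Measure (Fin q → ℝ)) (f '' S) = 0 := by
    refine sard (Measure.addHaar : Measure A.ker) volume hdim f (fderiv ℝ f) S
      (fun k hk => reg_of_contDiffAt (contDiff_fst.contDiffAt.comp k (hψ k hk))) ?_
    intro k hk hsurj
    have hd : HasFDerivAt (fun k : A.ker => e.symm (0, k))
      (fderiv ℝ (fun k : A.ker => e.symm (0, k)) k) k :=
      ((hψ k hk).differentiableAt (by norm_num)).hasFDerivAt
    set ψ' := fderiv ℝ (fun k : A.ker => e.symm (0, k)) k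
    have hf' : fderiv ℝ f k = (ContinuousLinearMap.fst ℝ _ _).comp ψ' := hd.fst.fderiv
    set z := e.symm (0, k) with hz
    have hρd : HasFDerivAt ρ (fderiv ℝ ρ z) z := (hZd z hk.2.2).hasFDerivAt
    have hcomp : HasFDerivAt (fun k : A.ker => ρ (e.symm (0, k))) ((fderiv ℝ ρ z).comp ψ') k :=
      HasFDerivAt.comp (g := ρ) k hρd hd
    have hev : (fun k : A.ker => ρ (e.symm (0, k))) =ᶠ[𝓝 k] fun _ => 0 := by
      have hc : ContinuousAt (fun k : A.ker => ((0 : Fin p → ℝ), k)) k := by fun_prop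
      filter_upwards [hc.preimage_mem_nhds (e.open_target.mem_nhds hk.1)] with k' hk'
      have h1 := e.right_inv hk'
      rw [hec] at h1
      exact congrArg Prod.fst h1
    have hzero : (fderiv ℝ ρ z).comp ψ' = 0 :=
      hcomp.unique ((hasFDerivAt_const 0 k).congr_of_eventuallyEq hev)
    have hsec : HasFDerivAt (fun w => ρ (z.1, w))
        ((fderiv ℝ ρ z).comp (ContinuousLinearMap.inr ℝ (Fin q → ℝ) (ℝ × (Fin p → ℝ)))) z.2 :=
      HasFDerivAt.comp (g := ρ) (f := fun w => (z.1, w)) z.2 hρd (hasFDerivAt_prodMk_right z.1 z.2)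
    refine hZs z hk.2.2 ?_
    rw [hsec.fderiv]
    intro v
    obtain ⟨⟨a, w⟩, haw⟩ := hZr z hk.2.2 v
    obtain ⟨k', hk'⟩ := hsurj a
    rw [hf'] at hk'
    have h1 : fderiv ℝ ρ z (ψ' k') = 0 := by
      have := congrArg (fun L : A.ker →L[ℝ] (Fin p → ℝ) => L k') hzero
      simpa using this
    refine ⟨w - (ψ' k').2, ?_⟩
    have h2 : ((0 : Fin q → ℝ), w - (ψ' k').2) = (a, w) - ψ' k' := by
      refine Prod.ext ?_ rfl
      have h3 : (ψ' k').1 = a := hk'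
      simp [h3]
    simp only [ContinuousLinearMap.comp_apply, ContinuousLinearMap.inr_apply]
    rw [h2, map_sub, haw, h1, sub_zero]
  refine ⟨Z ∩ {z | z ∈ e.source ∧ ContDiffAt ℝ 2 e.symm (e z)}, ?_, measure_mono_null ?_ hnull⟩
  · refine inter_mem self_mem_nhdsWithin (mem_nhdsWithin_of_mem_nhds ?_)
    have h1 : ∀ᶠ y in 𝓝 (e z₀), ContDiffAt ℝ 2 e.symm y := hsymm.eventually (by simp)
    exact inter_mem (e.open_source.mem_nhds hz₀) ((e.continuousAt hz₀).eventually h1)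
  · rintro _ ⟨z, ⟨hzZ, hzs, hzc⟩, rfl⟩
    have hez : e z = (0, A.projKerOfRightInverse R hR' z) := by
      rw [hec, hΦ]
      simp only [hZ0 z hzZ]
    have hzz : e.symm (0, A.projKerOfRightInverse R hR' z) = z := by
      rw [← hez, e.left_inv hzs]
    refine ⟨A.projKerOfRightInverse R hR' z, ⟨?_, ?_, ?_⟩, ?_⟩
    · rw [← hez]; exact e.map_source hzs
    · rw [← hez]; exact hzc
    · rw [hzz]; exact hzZ
    · exact congrArg Prod.fst hzz

end SardAux

/-- parametrised transversality of Chow–Mallet-Paret–Yorke: if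
`ρ : ℝ^q × ((0,1) × ℝ^p) → ℝ^p` is C² and `0` is a regular value of `ρ`, then for
Lebesgue-almost every `a ∈ ℝ^q`, `0` is a regular value of the section
`ρ_a = ρ(a, ·, ·) : (0,1) × ℝ^p → ℝ^p`. -/
theorem almost_every_section_has_zero_as_regular_value
    {q p : ℕ} (ρ : (Fin q → ℝ) × (ℝ × (Fin p → ℝ)) → Fin p → ℝ)
    (hρ : ContDiffOn ℝ 2 ρ
      ((Set.univ : Set (Fin q → ℝ)) ×ˢ (Set.Ioo (0 : ℝ) 1 ×ˢ (Set.univ : Set (Fin p → ℝ)))))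
    (hreg : ∀ z ∈ (Set.univ : Set (Fin q → ℝ)) ×ˢ
        (Set.Ioo (0 : ℝ) 1 ×ˢ (Set.univ : Set (Fin p → ℝ))),
      ρ z = 0 → Function.Surjective (fderiv ℝ ρ z)) :
    ∀ᵐ a ∂(volume : Measure (Fin q → ℝ)),
      ∀ lam ∈ Set.Ioo (0 : ℝ) 1, ∀ y : Fin p → ℝ,
        ρ (a, (lam, y)) = 0 →
        Function.Surjective
          (fderiv ℝ (fun w : ℝ × (Fin p → ℝ) => ρ (a, w)) (lam, y)) := by
  have hopen : IsOpen ((Set.univ : Set (Fin q → ℝ)) ×ˢ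
      (Set.Ioo (0 : ℝ) 1 ×ˢ (Set.univ : Set (Fin p → ℝ)))) :=
    isOpen_univ.prod (isOpen_Ioo.prod isOpen_univ)
  set Ω := (Set.univ : Set (Fin q → ℝ)) ×ˢ
      (Set.Ioo (0 : ℝ) 1 ×ˢ (Set.univ : Set (Fin p → ℝ))) with hΩ
  have hcd : ∀ z ∈ Ω, ContDiffAt ℝ 2 ρ z := fun z hz => hρ.contDiffAt (hopen.mem_nhds hz)
  let Z : Set ((Fin q → ℝ) × (ℝ × (Fin p → ℝ))) :=
    {z | z ∈ Ω ∧ ρ z = 0 ∧ ¬ Function.Surjective (fderiv ℝ (fun w => ρ (z.1, w)) z.2)}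
  have hnull : (OuterMeasure.comap Prod.fst
      (volume : Measure (Fin q → ℝ)).toOuterMeasure) Z = 0 := by
    refine measure_null_of_locally_null Z fun z hz => ?_
    obtain ⟨u, hu, hu0⟩ := SardAux.local_null ρ z (hcd z hz.1) (hreg z hz.1 hz.2.1) Z
      (fun z hz => (hcd z hz.1).differentiableAt (by norm_num))
      (fun z hz => hreg z hz.1 hz.2.1) (fun z hz => hz.2.1)
      (fun z hz => hz.2.2)
    exact ⟨u, hu, by simpa [OuterMeasure.comap_apply] using hu0⟩
  have hnull' : (volume : Measure (Fin q → ℝ)) (Prod.fst '' Z) = 0 := by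
    simpa [OuterMeasure.comap_apply] using hnull
  refine measure_mono_null ?_ hnull'
  intro a ha
  simp only [Set.mem_compl_iff, Set.mem_setOf_eq] at ha
  push Not at ha
  obtain ⟨lam, hlam, y, h0, hns⟩ := ha
  exact ⟨(a, (lam, y)), ⟨⟨trivial, hlam, trivial⟩, h0, hns⟩, rfl⟩
end

section
/- Let J: ℝⁿ → ℝ and g: ℝⁿ × [0,1] → ℝᵐ be continuously differentiable, a ∈ ℝⁿ, and let ρ_a be the associated homotopy map. Then every zero of the homotopy is primal and dual feasible for the intermediate problem at its parameter value: if ρ_a(λ, u, μ) = 0 for some (λ, u, μ) ∈ [0,1] × ℝⁿ × ℝᵐ, then gᵢ(u, λ) ≤ 0, μᵢ ≥ 0 and μᵢ·gᵢ(u, λ) = 0 for every i ∈ {1,…,m}. -/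
theorem phi_aux (a b : ℝ) (hab : b ≤ a) (h : (a - b) ^ 3 - a ^ 3 - b ^ 3 = 0) :
    b = 0 := by
  have h1 : b * (3 * a ^ 2 - 3 * a * b + 2 * b ^ 2) = 0 := by linarith [h, show (a - b) ^ 3 - a ^ 3 - b ^ 3 = -(b * (3 * a ^ 2 - 3 * a * b + 2 * b ^ 2)) by ring]
  rcases mul_eq_zero.mp h1 with h2 | h2
  · exact h2
  · have : b ^ 2 = 0 := by nlinarith [sq_nonneg (2 * a - b), sq_nonneg b]
    exact pow_eq_zero_iff (two_ne_zero) |>.mp this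

theorem cubicPhi_zero (a b : ℝ) (h : cubicPhi a b = 0) : 0 ≤ a ∧ 0 ≤ b ∧ a * b = 0 := by
  unfold cubicPhi at h
  rcases le_total b a with hab | hab
  · rw [abs_of_nonneg (by linarith)] at h
    have hb := phi_aux a b hab h
    subst hb
    simp [hab]
  · rw [abs_of_nonpos (by linarith)] at h
    have ha := phi_aux b a hab (by rw [neg_sub] at h; linarith)
    subst ha
    simp [hab]

/-- every zero of the homotopy is primal and dual feasible for the
intermediate problem at its parameter value. -/
theorem homotopyMap_zero_is_feasible
    {n m : ℕ} (J : EuclideanSpace ℝ (Fin n) → ℝ)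
    (g : EuclideanSpace ℝ (Fin n) → ℝ → Fin m → ℝ)
    (hJ : ContDiff ℝ 1 J)
    (hg : ∀ i, ContDiff ℝ 1 (fun q : EuclideanSpace ℝ (Fin n) × ℝ => g q.1 q.2 i))
    (a : EuclideanSpace ℝ (Fin n))
    (lam : ℝ) (hlam : lam ∈ Set.Icc (0 : ℝ) 1)
    (u : EuclideanSpace ℝ (Fin n)) (μ : Fin m → ℝ)
    (hzero : homotopyMap J g a lam u μ = 0) :
    ∀ i, g u lam i ≤ 0 ∧ 0 ≤ μ i ∧ μ i * g u lam i = 0 := by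
  intro i
  have h := congrFun (congrArg Prod.snd hzero) i
  obtain ⟨h1, h2, h3⟩ := cubicPhi_zero (μ i) (-(g u lam i)) h
  exact ⟨by linarith, h1, by linarith⟩
end

section
/- Let J: ℝⁿ → ℝ and g: ℝⁿ × [0,1] → ℝᵐ be continuously differentiable, a ∈ ℝⁿ, and let ρ_a be the associated homotopy map. Suppose (λ_k, u_k, μ_k) is a sequence in [0,1] × ℝⁿ × ℝᵐ with ρ_a(λ_k, u_k, μ_k) = 0 for all k, λ_k → 1, u_k → u* and μ_k → μ* as k → ∞. Then (u*, μ*) is a KKT pair for the original problem: ∇ᵤJ(u*) + Σᵢ μ*ᵢ ∇ᵤgᵢ(u*, 1) = 0, gᵢ(u*, 1) ≤ 0, μ*ᵢ ≥ 0, and μ*ᵢ·gᵢ(u*, 1) = 0 for every i; i.e., any accumulation point of the zero curve as the homotopy parameter tends to 1 solves the first-order necessary conditions of the original (λ = 1) problem. -/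
theorem cubicPhi_eq_zero_imp (a b : ℝ) (h : cubicPhi a b = 0) :
    0 ≤ b ∧ 0 ≤ a ∧ a * b = 0 := by
  unfold cubicPhi at h
  rcases le_total b a with hab | hab
  · rw [abs_of_nonneg (by linarith)] at h
    have h1 : b * (3 * (a - b / 2) ^ 2 + 5 / 4 * b ^ 2) = 0 := by linear_combination -h
    have hb : b = 0 := by
      rcases mul_eq_zero.1 h1 with h2 | h2
      · exact h2
      · have : b ^ 2 = 0 := by nlinarith [sq_nonneg (a - b / 2), sq_nonneg b]
        exact pow_eq_zero_iff (two_ne_zero) |>.1 this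
    subst hb
    exact ⟨le_rfl, hab, by ring⟩
  · rw [abs_of_nonpos (by linarith)] at h
    have h1 : a * (3 * (b - a / 2) ^ 2 + 5 / 4 * a ^ 2) = 0 := by linear_combination -h
    have hb : a = 0 := by
      rcases mul_eq_zero.1 h1 with h2 | h2
      · exact h2
      · have : a ^ 2 = 0 := by nlinarith [sq_nonneg (b - a / 2), sq_nonneg a]
        exact pow_eq_zero_iff (two_ne_zero) |>.1 this
    subst hb
    exact ⟨hab, le_rfl, by ring⟩

theorem continuous_cubicPhi : Continuous (fun p : ℝ × ℝ => cubicPhi p.1 p.2) := by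
  unfold cubicPhi
  fun_prop

/-- any accumulation point of the zero set of the homotopy as the
parameter tends to `1` is a KKT pair of the original (`λ = 1`) problem
`min J(u)` subject to `g(u,1) ≤ 0`. -/
theorem homotopyMap_accumulation_point_is_KKT
    {n m : ℕ} (J : EuclideanSpace ℝ (Fin n) → ℝ)
    (g : EuclideanSpace ℝ (Fin n) → ℝ → Fin m → ℝ)
    (hJ : ContDiff ℝ 1 J)
    (hg : ∀ i, ContDiff ℝ 1 (fun q : EuclideanSpace ℝ (Fin n) × ℝ => g q.1 q.2 i))
    (a : EuclideanSpace ℝ (Fin n))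
    (lam : ℕ → ℝ) (u : ℕ → EuclideanSpace ℝ (Fin n)) (μ : ℕ → Fin m → ℝ)
    (hlam_mem : ∀ k, lam k ∈ Set.Icc (0 : ℝ) 1)
    (hzero : ∀ k, homotopyMap J g a (lam k) (u k) (μ k) = 0)
    (ustar : EuclideanSpace ℝ (Fin n)) (mustar : Fin m → ℝ)
    (hlam : Filter.Tendsto lam Filter.atTop (nhds 1))
    (hu : Filter.Tendsto u Filter.atTop (nhds ustar))
    (hmu : Filter.Tendsto μ Filter.atTop (nhds mustar)) :
    (gradient J ustar + ∑ i, mustar i • gradient (fun v => g v 1 i) ustar = 0) ∧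
    (∀ i, g ustar 1 i ≤ 0) ∧ (∀ i, 0 ≤ mustar i) ∧
    (∀ i, mustar i * g ustar 1 i = 0) := by
  have hpair : Filter.Tendsto (fun k => (u k, lam k)) Filter.atTop (nhds (ustar, 1)) :=
    hu.prodMk_nhds hlam
  have hmui : ∀ i, Filter.Tendsto (fun k => μ k i) Filter.atTop (nhds (mustar i)) :=
    fun i => (tendsto_pi_nhds.1 hmu) i
  have hgJ : Continuous (gradient J) := by
    have := hJ.continuous_fderiv (by norm_num)
    exact (InnerProductSpace.toDual ℝ (EuclideanSpace ℝ (Fin n))).symm.continuous.comp this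
  have hgg : ∀ i, Continuous (fun q : EuclideanSpace ℝ (Fin n) × ℝ =>
      gradient (fun v => g v q.2 i) q.1) := by
    intro i
    have h1 : ContDiff ℝ 0 (fun q : EuclideanSpace ℝ (Fin n) × ℝ =>
        fderiv ℝ (fun v => g v q.2 i) q.1) := by
      refine ContDiff.fderiv (m := 1) (n := 0)
        (f := fun (q : EuclideanSpace ℝ (Fin n) × ℝ) v => g v q.2 i) ?_ contDiff_fst (by norm_num)
      exact (hg i).comp (g := fun q : EuclideanSpace ℝ (Fin n) × ℝ => g q.1 q.2 i)
        (f := fun z : (EuclideanSpace ℝ (Fin n) × ℝ) × EuclideanSpace ℝ (Fin n) => (z.2, z.1.2))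
        (by fun_prop)
    exact (InnerProductSpace.toDual ℝ (EuclideanSpace ℝ (Fin n))).symm.continuous.comp
      h1.continuous
  have hcomp : ∀ i, 0 ≤ -(g ustar 1 i) ∧ 0 ≤ mustar i ∧ mustar i * -(g ustar 1 i) = 0 := by
    intro i
    apply cubicPhi_eq_zero_imp
    have hgi : Filter.Tendsto (fun k => g (u k) (lam k) i) Filter.atTop
        (nhds (g ustar 1 i)) := ((hg i).continuous.tendsto (ustar, 1)).comp hpair
    have ht := (continuous_cubicPhi.tendsto (mustar i, -(g ustar 1 i))).comp
      ((hmui i).prodMk_nhds hgi.neg)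
    refine tendsto_nhds_unique ht (tendsto_const_nhds.congr fun k => ?_)
    exact (congrFun (congrArg Prod.snd (hzero k)) i).symm
  refine ⟨?_, fun i => by linarith [(hcomp i).1], fun i => (hcomp i).2.1,
    fun i => by linarith [(hcomp i).2.2]⟩
  have hsum : Filter.Tendsto (fun k => ∑ i, μ k i • gradient (fun v => g v (lam k) i) (u k))
      Filter.atTop (nhds (∑ i, mustar i • gradient (fun v => g v 1 i) ustar)) :=
    tendsto_finsetSum _ fun i _ =>
      (hmui i).smul (((hgg i).tendsto (ustar, 1)).comp hpair)
  have ht := (hlam.smul (((hgJ.tendsto ustar).comp hu).add hsum)).add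
    ((hlam.const_sub 1).smul (hu.sub_const a))
  simp only [one_smul, sub_self, zero_smul, add_zero] at ht
  refine tendsto_nhds_unique ht (tendsto_const_nhds.congr fun k => ?_)
  exact (congrArg Prod.fst (hzero k)).symm
end

section
/- Let p ∈ ℕ and let H: [0,1) × ℝ^p → ℝ^p be continuous, and continuously differentiable on (0,1) × ℝ^p with 0 a regular value of the restriction of H to (0,1) × ℝ^p. Suppose there is exactly one point z₀ = (0, x₀) with H(z₀) = 0 whose first coordinate is 0, and that the partial Jacobian ∇ₓH(0, x₀) ∈ ℝ^{p×p} is nonsingular. Let C be the connected component of H⁻¹(0) containing z₀. If C is a bounded subset of [0,1) × ℝ^p, then sup{ λ : (λ, x) ∈ C } = 1; i.e., the zero curve of H emanating from z₀ cannot loop back to the level λ = 0 nor terminate at an intermediate parameter value, and must approach the level λ = 1. -/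
open Set Filter Topology MeasureTheory

noncomputable def detForm (p : ℕ) : (Fin p → ℝ) [⋀^Fin p]→L[ℝ] ℝ :=
  { (Matrix.detRowAlternating : (Fin p → ℝ) [⋀^Fin p]→ₗ[ℝ] ℝ) with
    cont := by
      change Continuous fun M : Matrix (Fin p) (Fin p) ℝ => M.det
      exact Continuous.matrix_det continuous_id }

lemma detForm_apply {p : ℕ} (v : Fin p → Fin p → ℝ) : detForm p v = Matrix.det (Matrix.of v) := rfl

lemma stokes_aux {p : ℕ} (G : ℝ × (Fin p → ℝ) → Fin p → ℝ) (hG : ContDiff ℝ 2 G)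
    (φ : (Fin p → ℝ) → ℝ) (hφ : ContDiff ℝ 1 φ)
    (η a : ℝ × (Fin p → ℝ) → ℝ) (hη : ContDiff ℝ 1 η) (hηc : HasCompactSupport η)
    (hηa : ∀ z v, fderiv ℝ η z v * φ (G z) = a z * v.1 * φ (G z)) :
    ∫ z, a z * φ (G z) * detForm p (fun j => fderiv ℝ G z (0, Pi.single j 1)) = 0 := by
  let v : Fin (p + 1) → ℝ × (Fin p → ℝ) := Fin.cons (1, 0) (fun j => (0, Pi.single j 1))
  let ω₀ : (Fin p → ℝ) → (Fin p → ℝ) [⋀^Fin p]→L[ℝ] ℝ := fun y => φ y • detForm p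
  let ω : ℝ × (Fin p → ℝ) → (ℝ × (Fin p → ℝ)) [⋀^Fin p]→L[ℝ] ℝ :=
    fun z => (ω₀ (G z)).compContinuousLinearMap (fderiv ℝ G z)
  have hω₀ : ContDiff ℝ 1 ω₀ := hφ.smul contDiff_const
  have hdω : ∀ z, extDeriv ω z = 0 := by
    intro z
    rw [extDeriv_pullback (r := 2) (hω₀.differentiable one_ne_zero _) hG.contDiffAt (by simp)]
    ext u
    rw [ContinuousAlternatingMap.compContinuousLinearMap_apply]
    apply AlternatingMap.map_linearDependent (extDeriv ω₀ (G z)).toAlternatingMap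
    intro h
    have := h.fintype_card_le_finrank
    simp at this
  let g : Fin (p + 1) → ℝ × (Fin p → ℝ) → ℝ := fun i z => ω z (i.removeNth v)
  have hg : ∀ i, ContDiff ℝ 1 (g i) := by
    intro i
    have hdet : ContDiff ℝ 1 fun z =>
        Matrix.det (Matrix.of fun j => fderiv ℝ G z (i.removeNth v j)) := by
      have h1 : ∀ j k, ContDiff ℝ 1 fun z => fderiv ℝ G z (i.removeNth v j) k := by
        intro j k
        have h2 : ContDiff ℝ 1 fun z => fderiv ℝ G z (i.removeNth v j) :=
          (hG.fderiv_right (m := 1) (by norm_num)).clm_apply contDiff_const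
        exact contDiff_pi.1 h2 k
      simp only [Matrix.det_apply]
      refine ContDiff.sum fun σ _ => ContDiff.const_smul _ ?_
      exact contDiff_prod fun k _ => h1 _ _
    exact (hφ.comp (hG.of_le (by norm_num))).mul hdet
  have hωd : Differentiable ℝ ω := fun z =>
    DifferentiableAt.continuousAlternatingMapCompContinuousLinearMap
      ((hω₀.differentiable one_ne_zero _).comp z (hG.differentiable two_ne_zero z))
      ((hG.fderiv_right (m := 1) (by norm_num)).differentiable one_ne_zero z)
  have hsum : ∀ z, ∑ i : Fin (p+1), (-1 : ℝ) ^ i.val * fderiv ℝ (g i) z (v i) = 0 := by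
    intro z
    have := extDeriv_apply (hωd z) v
    rw [hdω z] at this
    simpa using this.symm
  have hηcont : Continuous η := hη.continuous
  have hηdc : ∀ w, Continuous fun z => fderiv ℝ η z w := fun w =>
    (hη.continuous_fderiv one_ne_zero).clm_apply continuous_const
  have hgdc : ∀ i w, Continuous fun z => fderiv ℝ (g i) z w := fun i w =>
    ((hg i).continuous_fderiv one_ne_zero).clm_apply continuous_const
  have i1 : ∀ i, Integrable (fun z => fderiv ℝ η z (v i) * g i z) := fun i =>
    ((hηdc _).mul (hg i).continuous).integrable_of_hasCompactSupport
      ((hηc.fderiv_apply ℝ (v i)).mul_right)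
  have i2 : ∀ i, Integrable (fun z => η z * fderiv ℝ (g i) z (v i)) := fun i =>
    (hηcont.mul (hgdc _ _)).integrable_of_hasCompactSupport hηc.mul_right
  have i3 : ∀ i, Integrable (fun z => η z * g i z) := fun i =>
    (hηcont.mul (hg i).continuous).integrable_of_hasCompactSupport hηc.mul_right
  have : (volume : Measure (ℝ × (Fin p → ℝ))).IsAddHaarMeasure := by
    rw [Measure.volume_eq_prod]; infer_instance
  have ibp : ∀ i, ∫ z, η z * fderiv ℝ (g i) z (v i) = - ∫ z, fderiv ℝ η z (v i) * g i z := fun i =>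
    integral_mul_fderiv_eq_neg_fderiv_mul_of_integrable (i1 i) (i2 i) (i3 i)
      (fun z _ => hη.differentiable one_ne_zero z) (fun z _ => (hg i).differentiable one_ne_zero z)
  have key : ∑ i : Fin (p+1), (-1 : ℝ) ^ i.val * ∫ z, fderiv ℝ η z (v i) * g i z = 0 := by
    have : ∀ i, ∫ z, fderiv ℝ η z (v i) * g i z = - ∫ z, η z * fderiv ℝ (g i) z (v i) := by
      intro i; rw [ibp]; simp
    simp only [this, mul_neg, Finset.sum_neg_distrib, ← integral_const_mul]
    rw [← integral_finsetSum _ (fun i _ => (i2 i).const_mul _)]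
    have h0 : ∀ z, ∑ i : Fin (p+1), (-1 : ℝ) ^ i.val * (η z * fderiv ℝ (g i) z (v i)) = 0 := by
      intro z
      have := congrArg (η z * ·) (hsum z)
      simp only [Finset.mul_sum, mul_zero] at this
      rw [← this]
      exact Finset.sum_congr rfl fun i _ => by ring
    simp [h0]
  have hgv : ∀ i z, g i z = φ (G z) * detForm p (fun j => fderiv ℝ G z (i.removeNth v j)) := by
    intro i z; rfl
  rw [Fin.sum_univ_succ] at key
  have hz : ∀ i : Fin p, ∀ z, fderiv ℝ η z (v i.succ) * g i.succ z = 0 := by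
    intro i z
    rw [hgv, ← mul_assoc, hηa]
    simp [v]
  have h00 : ∀ z, fderiv ℝ η z (v 0) * g 0 z =
      a z * φ (G z) * detForm p (fun j => fderiv ℝ G z (0, Pi.single j 1)) := by
    intro z
    rw [hgv, ← mul_assoc, hηa]
    simp [v, Fin.removeNth]
  simpa [hz, h00] using key

lemma detForm_ne_zero {p : ℕ} (A : (Fin p → ℝ) →L[ℝ] (Fin p → ℝ)) (hA : Function.Injective A) :
    detForm p (fun j => A (Pi.single j 1)) ≠ 0 := by
  have h1 : LinearMap.det (A : (Fin p → ℝ) →ₗ[ℝ] (Fin p → ℝ)) ≠ 0 := by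
    have h2 : LinearMap.ker (A : (Fin p → ℝ) →ₗ[ℝ] (Fin p → ℝ)) = ⊥ := LinearMap.ker_eq_bot.2 hA
    intro h
    exact (LinearMap.bot_lt_ker_of_det_eq_zero h).ne' h2
  rw [← LinearMap.det_toMatrix', ← Matrix.det_transpose] at h1
  rw [detForm_apply]
  convert h1 using 2
  ext i j
  simp [LinearMap.toMatrix'_apply]

open scoped Manifold ContDiff in
lemma degree_core {p : ℕ} (K : ℝ × (Fin p → ℝ) → Fin p → ℝ) (hK : Continuous K)
    (A : (Fin p → ℝ) →L[ℝ] (Fin p → ℝ)) (hA : Function.Injective A) (x₀ : Fin p → ℝ)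
    (hKA : ∀ z : ℝ × (Fin p → ℝ), z.1 ≤ -1 → K z = A (z.2 - x₀))
    (P Q : Set (ℝ × (Fin p → ℝ))) (hP : IsClosed P) (hQ : IsClosed Q) (hd : Disjoint Q P)
    (hseg : ∀ l ∈ Icc (-2 : ℝ) 0, (l, x₀) ∈ P) (b R : ℝ)
    (hQb : ∀ z : ℝ × (Fin p → ℝ), b ≤ z.1 → z ∈ Q)
    (hQR : ∀ z : ℝ × (Fin p → ℝ), R ≤ ‖z.2‖ → z ∈ Q)
    (hzero : ∀ z : ℝ × (Fin p → ℝ), -2 ≤ z.1 → K z = 0 → z ∈ P ∪ Q) : False := by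
  obtain ⟨χ', hχ0', hχ1', hχI'⟩ := exists_contMDiffMap_zero_one_nhds_of_isClosed (n := 1)
    𝓘(ℝ, ℝ × (Fin p → ℝ)) hQ hP hd
  obtain ⟨χ, hχ, hχ0, hχ1, hχI⟩ : ∃ χ : ℝ × (Fin p → ℝ) → ℝ, ContDiff ℝ 1 χ ∧
      (∀ z ∈ Q, ∀ᶠ y in 𝓝 z, χ y = 0) ∧ (∀ z ∈ P, ∀ᶠ y in 𝓝 z, χ y = 1) ∧
      ∀ z, χ z ∈ Icc (0 : ℝ) 1 :=
    ⟨χ', χ'.contMDiff.contDiff, fun z hz => eventually_nhdsSet_iff_forall.1 hχ0' z hz,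
      fun z hz => eventually_nhdsSet_iff_forall.1 hχ1' z hz, hχI'⟩
  clear hχ0' hχ1' hχI' χ'
  have hχQ : ∀ z ∈ Q, χ z = 0 := fun z hz => (hχ0 z hz).self_of_nhds
  have hχP : ∀ z ∈ P, χ z = 1 := fun z hz => (hχ1 z hz).self_of_nhds
  let B : Set (ℝ × (Fin p → ℝ)) := Icc (-2) b ×ˢ Metric.closedBall 0 R
  have hB : IsCompact B := isCompact_Icc.prod (isCompact_closedBall 0 R)
  have hBout : ∀ z : ℝ × (Fin p → ℝ), -2 ≤ z.1 → z ∉ B → z ∈ Q := by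
    intro z hz hzB
    by_contra hzQ
    apply hzB
    refine ⟨⟨hz, ?_⟩, ?_⟩
    · by_contra h; exact hzQ (hQb z (by linarith))
    · rw [mem_closedBall_zero_iff]; by_contra h; exact hzQ (hQR z (by linarith))
  let L := B \ (interior {z | χ z = 0} ∪ interior {z | χ z = 1})
  have hL : IsCompact L := hB.diff (isOpen_interior.union isOpen_interior)
  obtain ⟨d, hd0, hdL⟩ : ∃ a', (0:ℝ) < a' ∧ ∀ z ∈ L, a' ≤ ‖K z‖ := by
    refine hL.exists_forall_le' hK.norm.continuousOn ?_
    intro z hz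
    rw [norm_pos_iff]
    intro h0
    rcases hzero z hz.1.1.1 h0 with h | h
    · exact hz.2 (Or.inr (mem_interior_iff_mem_nhds.2 (hχ1 z h)))
    · exact hz.2 (Or.inl (mem_interior_iff_mem_nhds.2 (hχ0 z h)))
  obtain ⟨G, hG, hGK, hGS, -⟩ := hK.exists_contDiff_approx_and_eqOn 2 (ε := fun _ => d / 2)
    continuous_const (fun _ => by positivity)
    (S := {z | z.1 ≤ -5/4}) (U := {z | z.1 < -1})
    (isClosed_le continuous_fst continuous_const)
    ((isOpen_lt continuous_fst continuous_const).mem_nhdsSet.2 (by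
      intro z hz; simp only [mem_ofPred_eq] at *; linarith))
    (by
      have : ContDiff ℝ 2 fun z : ℝ × (Fin p → ℝ) => A (z.2 - x₀) := by fun_prop
      exact this.contDiffOn.congr fun z hz => hKA z (le_of_lt hz))
  have hGA : ∀ z : ℝ × (Fin p → ℝ), z.1 ≤ -5/4 → G z = A (z.2 - x₀) := fun z hz =>
    (hGS hz).trans (hKA z (by linarith))
  let φ : ContDiffBump (0 : Fin p → ℝ) := ⟨d/4, d/2, by positivity, by linarith⟩
  have hφ : ContDiff ℝ 1 φ := φ.contDiff
  have hφG : ∀ z ∈ L, φ (G z) = 0 := by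
    intro z hz
    apply φ.zero_of_le_dist
    have h1 := hdL z hz
    have h2 := hGK z
    rw [dist_eq_norm] at h2 ⊢
    have h3 : ‖K z‖ ≤ ‖G z‖ + ‖G z - K z‖ := by
      have := norm_sub_le (G z) (G z - K z)
      simpa using this
    change d / 2 ≤ _
    rw [sub_zero]
    linarith
  let ψ : ℝ → ℝ := fun t => Real.smoothTransition (2 * (t + 2))
  have hψ : ContDiff ℝ 1 ψ := Real.smoothTransition.contDiff.comp (by fun_prop)
  have hψd : Differentiable ℝ ψ := hψ.differentiable one_ne_zero
  have hψm : Monotone ψ := fun s t h => Real.smoothTransition.monotone (by linarith)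
  have hψ0 : ∀ t, t ≤ -2 → ψ t = 0 := fun t h =>
    Real.smoothTransition.zero_of_nonpos (by linarith)
  have hψ1 : ∀ t, -3/2 ≤ t → ψ t = 1 := fun t h =>
    Real.smoothTransition.one_of_one_le (by linarith)
  have hψ'1 : ∀ t, -3/2 < t → deriv ψ t = 0 := by
    intro t ht
    have : ψ =ᶠ[𝓝 t] fun _ => 1 := by
      filter_upwards [lt_mem_nhds ht] with s hs using hψ1 s hs.le
    rw [this.deriv_eq]; simp
  have hψ'0 : ∀ t, t < -2 → deriv ψ t = 0 := by
    intro t ht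
    have : ψ =ᶠ[𝓝 t] fun _ => 0 := by
      filter_upwards [gt_mem_nhds ht] with s hs using hψ0 s hs.le
    rw [this.deriv_eq]; simp
  let η : ℝ × (Fin p → ℝ) → ℝ := fun z => ψ z.1 * χ z
  let a : ℝ × (Fin p → ℝ) → ℝ := fun z => deriv ψ z.1 * χ z
  have hη : ContDiff ℝ 1 η := (hψ.comp contDiff_fst).mul hχ
  have hηc : HasCompactSupport η := by
    refine HasCompactSupport.intro hB fun z hz => ?_
    rcases le_total z.1 (-2) with h | h
    · simp [η, hψ0 _ h]
    · simp [η, hχQ z (hBout z h hz)]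
  have hηd : ∀ z v, fderiv ℝ η z v = ψ z.1 * fderiv ℝ χ z v + χ z * (deriv ψ z.1 * v.1) := by
    intro z v
    have h1 : HasFDerivAt (fun z : ℝ × (Fin p → ℝ) => ψ z.1)
        (deriv ψ z.1 • ContinuousLinearMap.fst ℝ ℝ (Fin p → ℝ)) z :=
      HasDerivAt.comp_hasFDerivAt (h₂ := ψ) z (hψd z.1).hasDerivAt hasFDerivAt_fst
    have h2 := h1.mul (hχ.differentiable one_ne_zero z).hasFDerivAt
    have h3 : fderiv ℝ η z = _ := h2.fderiv
    rw [h3]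
    simp
  have hχd : ∀ z, ψ z.1 ≠ 0 → φ (G z) ≠ 0 → fderiv ℝ χ z = 0 := by
    intro z h1 h2
    have hz : -2 ≤ z.1 := by
      by_contra h; exact h1 (hψ0 _ (by linarith))
    have hzL : z ∉ L := fun h => h2 (hφG z h)
    have aux : ∀ c : ℝ, (∀ᶠ y in 𝓝 z, χ y = c) → fderiv ℝ χ z = 0 := by
      intro c hc
      have : χ =ᶠ[𝓝 z] fun _ => c := hc
      rw [this.fderiv_eq]; simp
    by_cases hzB : z ∈ B
    · have : z ∈ interior {z | χ z = 0} ∪ interior {z | χ z = 1} := by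
        by_contra h; exact hzL ⟨hzB, h⟩
      rcases this with h | h
      · exact aux 0 (mem_interior_iff_mem_nhds.1 h)
      · exact aux 1 (mem_interior_iff_mem_nhds.1 h)
    · exact aux 0 (hχ0 z (hBout z hz hzB))
  have key := stokes_aux G hG φ hφ η a hη hηc (by
    intro z v
    rw [hηd]
    by_cases h1 : ψ z.1 = 0
    · simp only [h1, a]; ring
    by_cases h2 : φ (G z) = 0
    · simp only [h2, a]; ring
    · rw [hχd z h1 h2]; simp only [a, zero_apply]; ring)
  set c := detForm p (fun j => A (Pi.single j 1)) with hc
  have hcne : c ≠ 0 := detForm_ne_zero A hA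
  have hint : ∀ z, a z * φ (G z) * detForm p (fun j => fderiv ℝ G z (0, Pi.single j 1)) =
      a z * φ (G z) * c := by
    intro z
    by_cases hz : -3/2 < z.1
    · simp [a, hψ'1 _ hz]
    · have hev : G =ᶠ[𝓝 z] fun y => A (y.2 - x₀) := by
        have : ∀ᶠ y : ℝ × (Fin p → ℝ) in 𝓝 z, y.1 < -5/4 :=
          (isOpen_lt continuous_fst continuous_const).mem_nhds (by
            simp only [mem_ofPred_eq]; linarith)
        filter_upwards [this] with y hy using hGA y hy.le
      have hf : HasFDerivAt (fun y : ℝ × (Fin p → ℝ) => A (y.2 - x₀))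
          (A.comp (ContinuousLinearMap.snd ℝ ℝ (Fin p → ℝ))) z :=
        A.hasFDerivAt.comp z (hasFDerivAt_snd.sub_const x₀)
      rw [hev.fderiv_eq, hf.fderiv]
      simp [hc]
  simp only [hint] at key
  rw [integral_mul_const] at key
  have key0 : ∫ z, a z * φ (G z) = 0 := (mul_eq_zero.1 key).resolve_right hcne
  have hac : Continuous a :=
    ((hψ.continuous_deriv le_rfl).comp continuous_fst).mul hχ.continuous
  have hfc : Continuous fun z => a z * φ (G z) := hac.mul (φ.continuous.comp hG.continuous)
  have hfs : HasCompactSupport fun z => a z * φ (G z) := by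
    refine HasCompactSupport.intro hB fun z hz => ?_
    rcases lt_or_ge z.1 (-2) with h | h
    · simp [a, hψ'0 _ h]
    · simp [a, hχQ z (hBout z h hz)]
  have hfn : 0 ≤ fun z => a z * φ (G z) := fun z =>
    mul_nonneg (mul_nonneg hψm.deriv_nonneg (hχI z).1) φ.nonneg
  obtain ⟨t, ht, hts⟩ := exists_deriv_eq_slope ψ (a := -2) (b := -3/2) (by norm_num)
    hψ.continuous.continuousOn hψd.differentiableOn
  rw [hψ1 _ le_rfl, hψ0 _ le_rfl] at hts
  have := hfc.integral_pos_of_hasCompactSupport_nonneg_nonzero (μ := volume) hfs hfn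
    (x := (t, x₀)) (by
      have h1 : χ (t, x₀) = 1 := hχP _ (hseg t ⟨ht.1.le, by linarith [ht.2]⟩)
      have h2 : G (t, x₀) = 0 := by
        rw [hGA _ (by change t ≤ _; linarith [ht.2])]; simp
      have h3 : φ 0 = 1 := φ.one_of_mem_closedBall (by simp [φ.rIn_pos.le])
      simp only [a, h1, h2, h3, hts]
      norm_num)
  linarith

lemma exists_clopen_piece {X : Type*} [TopologicalSpace X] [T2Space X] {S T O : Set X}
    (hT : IsCompact T) (hTS : T ⊆ S) (hO : IsOpen O) (z : X) (hz : z ∈ T)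
    (hC : connectedComponentIn S z ⊆ O) :
    ∃ N M : Set X, IsCompact N ∧ IsCompact M ∧ Disjoint N M ∧ N ∪ M = T ∧ z ∈ N ∧ N ⊆ O := by
  have : CompactSpace T := isCompact_iff_compactSpace.1 hT
  let x : T := ⟨z, hz⟩
  have hne : Nonempty { s : Set T // IsClopen s ∧ x ∈ s } := ⟨⟨univ, isClopen_univ, mem_univ _⟩⟩
  obtain ⟨V, hV⟩ := exists_subset_nhds_of_compactSpace
    (V := fun s : { s : Set T // IsClopen s ∧ x ∈ s } => (s : Set T))
    (U := Subtype.val ⁻¹' O)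
    (fun s t => ⟨⟨s ∩ t, s.2.1.inter t.2.1, s.2.2, t.2.2⟩, inter_subset_left, inter_subset_right⟩)
    (fun s => s.2.1.1)
    (by
      intro y hy
      rw [← connectedComponent_eq_iInter_isClopen] at hy
      refine (hO.preimage continuous_subtype_val).mem_nhds ?_
      apply hC
      apply connectedComponentIn_mono z hTS
      rw [connectedComponentIn_eq_image hz]
      exact mem_image_of_mem _ hy)
  refine ⟨Subtype.val '' (V : Set T), Subtype.val '' (V : Set T)ᶜ,
    V.2.1.1.isCompact.image continuous_subtype_val,
    V.2.1.compl.1.isCompact.image continuous_subtype_val, ?_, ?_, ⟨x, V.2.2, rfl⟩, ?_⟩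
  · exact (disjoint_image_iff Subtype.val_injective).2 disjoint_compl_right
  · rw [← image_union, union_compl_self]; simp
  · rintro _ ⟨y, hy, rfl⟩; exact hV hy

theorem zero_curve_reaches_lambda_one
    {p : ℕ} (H : ℝ × (Fin p → ℝ) → Fin p → ℝ)
    (hcont : ContinuousOn H (Set.Ico (0 : ℝ) 1 ×ˢ (Set.univ : Set (Fin p → ℝ))))
    (hcd : ContDiffOn ℝ 1 H (Set.Ioo (0 : ℝ) 1 ×ˢ (Set.univ : Set (Fin p → ℝ))))
    (hreg : ∀ z ∈ Set.Ioo (0 : ℝ) 1 ×ˢ (Set.univ : Set (Fin p → ℝ)),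
      H z = 0 → Function.Surjective (fderiv ℝ H z))
    (x₀ : Fin p → ℝ) (hx₀ : H (0, x₀) = 0)
    (huniq : ∀ x : Fin p → ℝ, H (0, x) = 0 → x = x₀)
    (hjac : Function.Bijective (fderiv ℝ (fun x => H (0, x)) x₀))
    (C : Set (ℝ × (Fin p → ℝ)))
    (hC : C = connectedComponentIn
      {z : ℝ × (Fin p → ℝ) | z.1 ∈ Set.Ico (0 : ℝ) 1 ∧ H z = 0} (0, x₀))
    (hbdd : Bornology.IsBounded C) :
    sSup {l : ℝ | ∃ x : Fin p → ℝ, (l, x) ∈ C} = 1 := by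
  by_contra hne
  set S := {z : ℝ × (Fin p → ℝ) | z.1 ∈ Set.Ico (0 : ℝ) 1 ∧ H z = 0} with hS
  have hz₀S : ((0 : ℝ), x₀) ∈ S := ⟨⟨le_rfl, one_pos⟩, hx₀⟩
  have hz₀C : ((0 : ℝ), x₀) ∈ C := by rw [hC]; exact mem_connectedComponentIn hz₀S
  have hCS : C ⊆ S := by rw [hC]; exact connectedComponentIn_subset _ _
  set s := sSup {l : ℝ | ∃ x : Fin p → ℝ, (l, x) ∈ C} with hs
  have hub : ∀ l ∈ {l : ℝ | ∃ x : Fin p → ℝ, (l, x) ∈ C}, l ≤ 1 := by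
    rintro l ⟨x, hx⟩; exact (hCS hx).1.2.le
  have hs1 : s < 1 := lt_of_le_of_ne (csSup_le ⟨0, x₀, hz₀C⟩ hub) hne
  have hCs : ∀ z ∈ C, z.1 ≤ s := fun z hz => le_csSup ⟨1, hub⟩ ⟨z.2, hz⟩
  have hs0 : 0 ≤ s := hCs _ hz₀C
  obtain ⟨b, hsb, hb1⟩ := exists_between hs1
  have hb0 : 0 < b := hs0.trans_lt hsb
  obtain ⟨R₀, hR₀⟩ := hbdd.exists_norm_le
  let R := R₀ + 1
  have hCR : ∀ z ∈ C, ‖z.2‖ < R := fun z hz => by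
    have h1 := hR₀ z hz
    have h2 := norm_snd_le z
    change _ < R₀ + 1
    linarith
  let T : Set (ℝ × (Fin p → ℝ)) := (Icc 0 b ×ˢ Metric.closedBall 0 R) ∩ H ⁻¹' {0}
  have hbox : IsCompact (Icc 0 b ×ˢ Metric.closedBall (0 : Fin p → ℝ) R) :=
    isCompact_Icc.prod (isCompact_closedBall 0 R)
  have hT : IsCompact T := by
    refine hbox.of_isClosed_subset ?_ inter_subset_left
    refine ContinuousOn.preimage_isClosed_of_isClosed ?_ hbox.isClosed isClosed_singleton
    exact hcont.mono (prod_mono (fun l hl => ⟨hl.1, hl.2.trans_lt hb1⟩) (subset_univ _))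
  have hTS : T ⊆ S := fun z hz => ⟨⟨hz.1.1.1, hz.1.1.2.trans_lt hb1⟩, hz.2⟩
  have hz₀T : ((0 : ℝ), x₀) ∈ T :=
    ⟨⟨⟨le_rfl, hb0.le⟩, by simpa using (hCR _ hz₀C).le⟩, hx₀⟩
  obtain ⟨N, M, hN, hM, hNM, hNMT, hz₀N, hNO⟩ := exists_clopen_piece (S := S)
    (O := {z | z.1 < b} ∩ {z | ‖z.2‖ < R}) hT hTS
    ((isOpen_lt continuous_fst continuous_const).inter
      (isOpen_lt continuous_snd.norm continuous_const)) _ hz₀T (by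
      rw [← hC]
      exact fun z hz => ⟨(hCs z hz).trans_lt hsb, hCR z hz⟩)
  have hNT : N ⊆ T := hNMT ▸ subset_union_left
  have hMT : M ⊆ T := hNMT ▸ subset_union_right
  have hT0 : ∀ z ∈ T, z.1 ≤ 0 → z = (0, x₀) := by
    rintro ⟨l, x⟩ hz hl
    have hl0 : l = 0 := le_antisymm hl hz.1.1.1
    subst hl0
    rw [huniq x hz.2]
  -- the linearization at the starting point
  set A := fderiv ℝ (fun x => H (0, x)) x₀ with hAdef
  have hdiff : HasFDerivAt (fun x => H (0, x)) A x₀ := by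
    by_cases h : DifferentiableAt ℝ (fun x => H (0, x)) x₀
    · exact h.hasFDerivAt
    · have hA0 : A = 0 := fderiv_zero_of_not_differentiableAt h
      have : Subsingleton (Fin p → ℝ) := ⟨fun x y => hjac.1 (by simp [hA0])⟩
      exact (hasFDerivAt_of_subsingleton _ _).congr_fderiv (Subsingleton.elim _ _)
  obtain ⟨c, hc0, hc⟩ : ∃ c : ℝ, 0 < c ∧ ∀ y, c * ‖y‖ ≤ ‖A y‖ := by
    obtain ⟨k, hk0, hk⟩ := LinearMap.exists_antilipschitzWith
      (A : (Fin p → ℝ) →ₗ[ℝ] (Fin p → ℝ)) (LinearMap.ker_eq_bot.2 hjac.1)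
    refine ⟨(k : ℝ)⁻¹, by positivity, fun y => ?_⟩
    have := hk.le_mul_dist y 0
    simp only [dist_zero_right, map_zero] at this
    rw [inv_mul_le_iff₀ (by positivity)]
    exact this
  obtain ⟨r, hr0, hr⟩ : ∃ r : ℝ, 0 < r ∧ ∀ x, ‖x - x₀‖ < r →
      ‖H (0, x) - A (x - x₀)‖ ≤ c / 2 * ‖x - x₀‖ := by
    have h1 := hdiff.isLittleO.def (half_pos hc0)
    obtain ⟨r, hr0, hr⟩ := Metric.eventually_nhds_iff.1 h1
    refine ⟨r, hr0, fun x hx => ?_⟩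
    have := hr (y := x) (by rwa [dist_eq_norm])
    simpa [hx₀] using this
  -- the extended homotopy
  let t : ℝ → ℝ := fun l => max 0 (min 1 (-l))
  let cl : ℝ → ℝ := fun l => max 0 (min b l)
  have ht : Continuous t := by fun_prop
  have hcl : Continuous cl := by fun_prop
  have hclm : ∀ l, cl l ∈ Ico (0 : ℝ) 1 := fun l =>
    ⟨le_max_left _ _, max_lt one_pos ((min_le_left _ _).trans_lt hb1)⟩
  let K : ℝ × (Fin p → ℝ) → Fin p → ℝ := fun z =>
    (1 - t z.1) • H (cl z.1, z.2) + t z.1 • A (z.2 - x₀)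
  have hK : Continuous K := by
    have h1 : Continuous fun z : ℝ × (Fin p → ℝ) => H (cl z.1, z.2) :=
      hcont.comp_continuous ((hcl.comp continuous_fst).prodMk continuous_snd)
        (fun z => ⟨hclm _, mem_univ _⟩)
    have h2 : Continuous fun z : ℝ × (Fin p → ℝ) => t z.1 := ht.comp continuous_fst
    exact ((continuous_const.sub h2).smul h1).add
      (h2.smul (A.continuous.comp (continuous_snd.sub continuous_const)))
  have ht01 : ∀ l, t l ∈ Icc (0 : ℝ) 1 := fun l =>
    ⟨le_max_left _ _, max_le zero_le_one (min_le_left _ _)⟩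
  have hKneg : ∀ z : ℝ × (Fin p → ℝ), z.1 ≤ 0 → ‖z.2 - x₀‖ < r → K z = 0 → z.2 = x₀ := by
    intro z hz hzr hz0
    have hc0' : cl z.1 = 0 := by
      simp only [cl]
      rw [min_eq_right (hz.trans hb0.le), max_eq_left hz]
    have h1 : A (z.2 - x₀) = -((1 - t z.1) • (H (0, z.2) - A (z.2 - x₀))) := by
      have h2 : K z = (1 - t z.1) • H (0, z.2) + t z.1 • A (z.2 - x₀) := by
        simp only [K, hc0']
      rw [hz0] at h2
      rw [eq_neg_iff_add_eq_zero, h2]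
      module
    have h2 : ‖A (z.2 - x₀)‖ ≤ c / 2 * ‖z.2 - x₀‖ := by
      rw [h1, norm_neg, norm_smul]
      have h3 := hr z.2 hzr
      have h4 : ‖1 - t z.1‖ ≤ 1 := by
        rw [Real.norm_eq_abs, abs_le]
        constructor <;> linarith [(ht01 z.1).1, (ht01 z.1).2]
      calc _ ≤ 1 * ‖H (0, z.2) - A (z.2 - x₀)‖ := by gcongr
        _ ≤ _ := by rw [one_mul]; exact h3
    have h3 := hc (z.2 - x₀)
    have h4 : ‖z.2 - x₀‖ = 0 := by
      have := norm_nonneg (z.2 - x₀)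
      nlinarith
    exact sub_eq_zero.1 (norm_eq_zero.1 h4)
  refine degree_core K hK A hjac.1 x₀ ?_ (N ∪ Icc (-2) 0 ×ˢ {x₀})
    (M ∪ ({z | b ≤ z.1} ∪ ({z | R ≤ ‖z.2‖} ∪ ({z | z.1 ≤ 0} ∩ {z | r ≤ ‖z.2 - x₀‖}))))
    (hN.isClosed.union (isClosed_Icc.prod isClosed_singleton)) ?_ ?_ ?_ b R ?_ ?_ ?_
  · intro z hz
    have : t z.1 = 1 := by
      simp only [t]
      rw [min_eq_left (by linarith), max_eq_right zero_le_one]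
    simp [K, this]
  · refine hM.isClosed.union ((isClosed_le continuous_const continuous_fst).union
      ((isClosed_le continuous_const continuous_snd.norm).union
      ((isClosed_le continuous_fst continuous_const).inter
      (isClosed_le continuous_const (continuous_snd.sub continuous_const).norm))))
  · rw [Set.disjoint_left]
    rintro z hzQ hzP
    rcases hzP with hzN | ⟨hz1, hz2⟩
    · rcases hzQ with h | h | h | ⟨h1, h2⟩
      · exact Set.disjoint_left.1 hNM hzN h
      · exact not_lt.2 (show b ≤ z.1 from h) (hNO hzN).1
      · exact not_lt.2 (show R ≤ ‖z.2‖ from h) (hNO hzN).2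
      · have := hT0 z (hNT hzN) h1
        subst this
        change r ≤ ‖x₀ - x₀‖ at h2
        simp at h2
        linarith
    · have hz2' : z.2 = x₀ := hz2
      rcases hzQ with h | h | h | ⟨h1, h2⟩
      · have := hT0 z (hMT h) hz1.2
        subst this
        exact Set.disjoint_left.1 hNM hz₀N h
      · have h' : b ≤ z.1 := h
        linarith [hz1.2]
      · have h' : R ≤ ‖z.2‖ := h
        rw [hz2'] at h'
        have := hCR _ hz₀C
        simp only at this
        linarith
      · change r ≤ ‖z.2 - x₀‖ at h2
        simp [hz2'] at h2
        linarith
  · intro l hl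
    exact Or.inr ⟨hl, rfl⟩
  · intro z hz
    exact Or.inr (Or.inl hz)
  · intro z hz
    exact Or.inr (Or.inr (Or.inl hz))
  · intro z hz hz0
    rcases le_or_gt z.1 0 with h0 | h0
    · rcases lt_or_ge ‖z.2 - x₀‖ r with h | h
      · exact Or.inl (Or.inr ⟨⟨hz, h0⟩, hKneg z h0 h hz0⟩)
      · exact Or.inr (Or.inr (Or.inr (Or.inr ⟨h0, h⟩)))
    rcases le_or_gt b z.1 with h1 | h1
    · exact Or.inr (Or.inr (Or.inl h1))
    rcases le_or_gt R ‖z.2‖ with h2 | h2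
    · exact Or.inr (Or.inr (Or.inr (Or.inl h2)))
    have hKz : K z = H z := by
      have e1 : t z.1 = 0 := by
        simp only [t]
        rw [max_eq_left]
        exact (min_le_right _ _).trans (by linarith)
      have e2 : cl z.1 = z.1 := by
        simp only [cl]
        rw [min_eq_right h1.le, max_eq_right h0.le]
      simp [K, e1, e2]
    have hzT : z ∈ T := ⟨⟨⟨h0.le, h1.le⟩, by simpa using h2.le⟩, by simpa [hKz] using hz0⟩
    rw [← hNMT] at hzT
    rcases hzT with h | h
    · exact Or.inl (Or.inl h)
    · exact Or.inr (Or.inl h)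
end
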